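/- arXiv:0903.3854 — 2 statements merged into one kernel-verified Lean document; each statement's English description precedes it below -/
import Mathlib

section
/- For bigraded harmonic polynomial spaces on ℂⁿ, the product space satisfies H_{p,q} · H_{l,m} ⊆ ⊕_{j=0}^{ν} H_{p+l−j, q+m−j} (as subspaces of polynomials, where a product lies in the sum of the indicated harmonic spaces multiplied by appropriate powers of |z|²), with ν = min(p,m) + min(l,q). Concretely: every product PQ with P ∈ H_{p,q}, Q ∈ H_{l,m} can be written as Σ_{j=0}^{ν} |z|^{2j} R_j with R_j ∈ H_{p+l−j, q+m−j}. -/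
open Complex

noncomputable section

/-- Wirtinger derivative ∂/∂z_j = (1/2)(∂/∂x_j − i ∂/∂y_j). -/
def wderiv {n : ℕ} (j : Fin n) (f : (Fin n → ℂ) → ℂ) (z : Fin n → ℂ) : ℂ :=
  (1 / 2 : ℂ) * (fderiv ℝ f z (Pi.single j 1) - Complex.I * fderiv ℝ f z (Pi.single j Complex.I))

/-- Conjugate Wirtinger derivative ∂/∂z̄_j = (1/2)(∂/∂x_j + i ∂/∂y_j). -/
def wderivBar {n : ℕ} (j : Fin n) (f : (Fin n → ℂ) → ℂ) (z : Fin n → ℂ) : ℂ :=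
  (1 / 2 : ℂ) * (fderiv ℝ f z (Pi.single j 1) + Complex.I * fderiv ℝ f z (Pi.single j Complex.I))

/-- The Laplacian on ℂⁿ ≅ ℝ^{2n}: Δ = 4 Σ_k ∂²/(∂z_k ∂z̄_k). -/
def lap {n : ℕ} (f : (Fin n → ℂ) → ℂ) (z : Fin n → ℂ) : ℂ :=
  4 * ∑ k, wderiv k (fun w => wderivBar k f w) z

/-- `f` is a polynomial in `z` and `z̄`. -/
def IsPolyZZbar {n : ℕ} (f : (Fin n → ℂ) → ℂ) : Prop :=
  ∃ Q : MvPolynomial ((Fin n) ⊕ (Fin n)) ℂ,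
    ∀ z, f z = MvPolynomial.eval (Sum.elim z (fun j => (starRingEnd ℂ) (z j))) Q

/-- `|z|²` as a complex number: `∑ z_k z̄_k`. -/
def nsq {n : ℕ} (z : Fin n → ℂ) : ℂ := ∑ k, z k * (starRingEnd ℂ) (z k)

/-- `f` is bigraded homogeneous of bidegree `(p,q)`:
`f(λz) = λ^p λ̄^q f(z)` for all `λ ∈ ℂ`. -/
def BiHomogeneous {n : ℕ} (p q : ℕ) (f : (Fin n → ℂ) → ℂ) : Prop :=
  ∀ (c : ℂ) (z : Fin n → ℂ), f (c • z) = c ^ p * (starRingEnd ℂ) c ^ q * f z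

/-- `f` belongs to `H_{p,q}`: a bigraded harmonic polynomial of bidegree `(p,q)`. -/
def IsBigradedHarmonic {n : ℕ} (p q : ℕ) (f : (Fin n → ℂ) → ℂ) : Prop :=
  IsPolyZZbar f ∧ BiHomogeneous p q f ∧ ∀ z, lap f z = 0

open MvPolynomial

/-- Polynomials in `z`, `z̄`. -/
abbrev PolyZ (n : ℕ) := MvPolynomial (Fin n ⊕ Fin n) ℂ

def wtA (n : ℕ) : Fin n ⊕ Fin n → ℕ := Sum.elim (fun _ => 1) (fun _ => 0)
def wtB (n : ℕ) : Fin n ⊕ Fin n → ℕ := Sum.elim (fun _ => 0) (fun _ => 1)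

/-- formal bihomogeneity -/
def BiH {n : ℕ} (a b : ℕ) (f : PolyZ n) : Prop :=
  f.IsWeightedHomogeneous (wtA n) a ∧ f.IsWeightedHomogeneous (wtB n) b

/-- formal Laplacian (without the factor four) -/
def flap {n : ℕ} : PolyZ n →ₗ[ℂ] PolyZ n :=
  ∑ k : Fin n, (pderiv (Sum.inl k)).toLinearMap ∘ₗ (pderiv (Sum.inr k)).toLinearMap

theorem flap_apply {n : ℕ} (f : PolyZ n) :
    flap f = ∑ k : Fin n, pderiv (Sum.inl k) (pderiv (Sum.inr k) f) := by
  simp [flap]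

def rho (n : ℕ) : PolyZ n := ∑ k : Fin n, X (Sum.inl k) * X (Sum.inr k)

/-- evaluation at `(z, z̄)` -/
def evz {n : ℕ} (z : Fin n → ℂ) : PolyZ n →+* ℂ :=
  MvPolynomial.eval (Sum.elim z (fun j => (starRingEnd ℂ) (z j)))

theorem pderiv_comm' {n : ℕ} (i j : Fin n ⊕ Fin n) (f : PolyZ n) :
    pderiv i (pderiv j f) = pderiv j (pderiv i f) := by
  classical
  have : ⁅(pderiv i : Derivation ℂ (PolyZ n) (PolyZ n)), (pderiv j : Derivation ℂ (PolyZ n) (PolyZ n))⁆ = 0 := by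
    apply MvPolynomial.derivation_ext
    intro k
    rw [Derivation.commutator_apply]
    simp only [pderiv_X, Pi.single_apply]
    split_ifs <;> simp
  have h := congrArg (fun D => D f) this
  rw [Derivation.commutator_apply] at h
  exact sub_eq_zero.mp h

theorem flap_pderiv {n : ℕ} (i : Fin n ⊕ Fin n) (f : PolyZ n) :
    flap (pderiv i f) = pderiv i (flap f) := by
  rw [flap_apply, flap_apply, map_sum]
  refine Finset.sum_congr rfl fun k _ => ?_
  rw [pderiv_comm' (Sum.inr k) i, pderiv_comm' (Sum.inl k) i]

theorem pderiv_eq_zero_of_weight {n : ℕ} {w : Fin n ⊕ Fin n → ℕ} (i : Fin n ⊕ Fin n) (hi : w i = 1)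
    {f : PolyZ n} (h : f.IsWeightedHomogeneous w 0) : pderiv i f = 0 := by
  ext s
  rw [coeff_pderiv]
  by_cases hc : coeff (s + Finsupp.single i 1) f = 0
  · simp [hc]
  · have := h hc
    simp [map_add, Finsupp.weight_single, hi] at this

theorem BiH.inl_succ {n a b : ℕ} {f : PolyZ n} (h : BiH (a + 1) b f) (k : Fin n) :
    BiH a b (pderiv (Sum.inl k) f) :=
  ⟨h.1.pderiv (by simp [wtA]), h.2.pderiv (by simp [wtB])⟩

theorem BiH.inr_succ {n a b : ℕ} {f : PolyZ n} (h : BiH a (b + 1) f) (k : Fin n) :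
    BiH a b (pderiv (Sum.inr k) f) :=
  ⟨h.1.pderiv (by simp [wtA]), h.2.pderiv (by simp [wtB])⟩

theorem BiH.inl_zero {n b : ℕ} {f : PolyZ n} (h : BiH 0 b f) (k : Fin n) :
    pderiv (Sum.inl k) f = 0 := pderiv_eq_zero_of_weight _ (by simp [wtA]) h.1

theorem BiH.inr_zero {n a : ℕ} {f : PolyZ n} (h : BiH a 0 f) (k : Fin n) :
    pderiv (Sum.inr k) f = 0 := pderiv_eq_zero_of_weight _ (by simp [wtB]) h.2

theorem BiH.mul {n a b c d : ℕ} {f g : PolyZ n} (h : BiH a b f) (h' : BiH c d g) :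
    BiH (a + c) (b + d) (f * g) := ⟨h.1.mul h'.1, h.2.mul h'.2⟩

theorem BiH.add {n a b : ℕ} {f g : PolyZ n} (h : BiH a b f) (h' : BiH a b g) :
    BiH a b (f + g) := ⟨h.1.add h'.1, h.2.add h'.2⟩

theorem BiH.sub {n a b : ℕ} {f g : PolyZ n} (h : BiH a b f) (h' : BiH a b g) :
    BiH a b (f - g) := ⟨h.1.sub h'.1, h.2.sub h'.2⟩

theorem BiH.zero {n a b : ℕ} : BiH a b (0 : PolyZ n) :=
  ⟨isWeightedHomogeneous_zero _ _ _, isWeightedHomogeneous_zero _ _ _⟩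

theorem BiH.smul {n a b : ℕ} {f : PolyZ n} (h : BiH a b f) (c : ℂ) : BiH a b (c • f) := by
  rw [smul_eq_C_mul]
  exact ⟨h.1.C_mul c, h.2.C_mul c⟩

theorem BiH.sum {n a b : ℕ} {ι : Type*} (s : Finset ι) (f : ι → PolyZ n)
    (h : ∀ i ∈ s, BiH a b (f i)) : BiH a b (∑ i ∈ s, f i) :=
  ⟨IsWeightedHomogeneous.sum s f a (fun i hi => (h i hi).1),
    IsWeightedHomogeneous.sum s f b (fun i hi => (h i hi).2)⟩

theorem BiH.rho (n : ℕ) : BiH 1 1 (rho n) := by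
  refine BiH.sum _ _ fun k _ => ?_
  have h1 : BiH 1 0 (X (Sum.inl k) : PolyZ n) :=
    ⟨by simpa [wtA] using isWeightedHomogeneous_X ℂ (wtA n) (Sum.inl k),
      by simpa [wtB] using isWeightedHomogeneous_X ℂ (wtB n) (Sum.inl k)⟩
  have h2 : BiH 0 1 (X (Sum.inr k) : PolyZ n) :=
    ⟨by simpa [wtA] using isWeightedHomogeneous_X ℂ (wtA n) (Sum.inr k),
      by simpa [wtB] using isWeightedHomogeneous_X ℂ (wtB n) (Sum.inr k)⟩
  exact h1.mul h2

theorem BiH.rho_pow (n j : ℕ) : BiH j j (_root_.rho n ^ j) := by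
  have h := BiH.rho n
  exact ⟨by simpa using h.1.pow j, by simpa using h.2.pow j⟩

theorem BiH.flap {n a b : ℕ} {f : PolyZ n} (h : BiH (a + 1) (b + 1) f) : BiH a b (flap f) := by
  rw [flap_apply]
  exact BiH.sum _ _ fun k _ => (h.inr_succ k).inl_succ k

theorem flap_mul {n : ℕ} {f g : PolyZ n} (hf : flap f = 0) (hg : flap g = 0) :
    flap (f * g) = (∑ k : Fin n, pderiv (Sum.inl k) f * pderiv (Sum.inr k) g)
      + ∑ k : Fin n, pderiv (Sum.inr k) f * pderiv (Sum.inl k) g := by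
  have : flap (f * g) = flap f * g + f * flap g +
      ((∑ k : Fin n, pderiv (Sum.inl k) f * pderiv (Sum.inr k) g)
      + ∑ k : Fin n, pderiv (Sum.inr k) f * pderiv (Sum.inl k) g) := by
    simp only [flap_apply, Finset.sum_mul, Finset.mul_sum, ← Finset.sum_add_distrib]
    refine Finset.sum_congr rfl fun k _ => ?_
    simp only [pderiv_mul, map_add]
    ring
  rw [this, hf, hg]; simp

/-- vanishing of the iterated Laplacian -/
theorem flap_iter {n : ℕ} (N : ℕ) : ∀ (p q l m : ℕ) (P Q : PolyZ n), BiH p q P → BiH l m Q →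
    flap P = 0 → flap Q = 0 → min p m + min l q < N → (flap ^ N) (P * Q) = 0 := by
  induction N with
  | zero => intro p q l m P Q _ _ _ _ h; omega
  | succ N ih =>
    intro p q l m P Q hP hQ hP0 hQ0 h
    rw [pow_succ, Module.End.mul_apply, flap_mul hP0 hQ0, map_add, map_sum, map_sum]
    have e1 : ∀ k : Fin n, (flap ^ N) (pderiv (Sum.inl k) P * pderiv (Sum.inr k) Q) = 0 := by
      intro k
      rcases p with _ | p
      · rw [hP.inl_zero]; simp
      rcases m with _ | m
      · rw [hQ.inr_zero]; simp
      exact ih p q l m _ _ (hP.inl_succ k) (hQ.inr_succ k) (by rw [flap_pderiv, hP0, map_zero])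
        (by rw [flap_pderiv, hQ0, map_zero]) (by omega)
    have e2 : ∀ k : Fin n, (flap ^ N) (pderiv (Sum.inr k) P * pderiv (Sum.inl k) Q) = 0 := by
      intro k
      rcases q with _ | q
      · rw [hP.inr_zero]; simp
      rcases l with _ | l
      · rw [hQ.inl_zero]; simp
      exact ih p q l m _ _ (hP.inr_succ k) (hQ.inl_succ k) (by rw [flap_pderiv, hP0, map_zero])
        (by rw [flap_pderiv, hQ0, map_zero]) (by omega)
    simp [e1, e2]

theorem pderiv_inl_rho {n : ℕ} (k : Fin n) :
    pderiv (Sum.inl k) (rho n) = X (Sum.inr k) := by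
  classical
  simp [rho, pderiv_mul, Pi.single_apply]

theorem pderiv_inr_rho {n : ℕ} (k : Fin n) :
    pderiv (Sum.inr k) (rho n) = X (Sum.inl k) := by
  classical
  simp [rho, pderiv_mul, Pi.single_apply]

theorem flap_rho_mul {n a b : ℕ} {f : PolyZ n} (h : BiH a b f) :
    flap (rho n * f) = rho n * flap f + ((n + a + b : ℕ) : ℂ) • f := by
  have hA := h.1.sum_weight_X_mul_pderiv
  have hB := h.2.sum_weight_X_mul_pderiv
  simp only [wtA, wtB, Fintype.sum_sum_type, Sum.elim_inl, Sum.elim_inr, zero_smul, one_smul,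
    Finset.sum_const_zero, add_zero, zero_add] at hA hB
  have : ((n + a + b : ℕ) : ℂ) • f = (∑ k : Fin n, f)
      + (∑ k : Fin n, X (Sum.inl k) * pderiv (Sum.inl k) f)
      + ∑ k : Fin n, X (Sum.inr k) * pderiv (Sum.inr k) f := by
    rw [hA, hB, Nat.cast_smul_eq_nsmul, add_smul, add_smul]
    simp
  rw [this, flap_apply, flap_apply, Finset.mul_sum, ← Finset.sum_add_distrib,
    ← Finset.sum_add_distrib, ← Finset.sum_add_distrib]
  refine Finset.sum_congr rfl fun k _ => ?_
  simp only [pderiv_mul, map_add, pderiv_inl_rho, pderiv_inr_rho, pderiv_X_self]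
  ring

theorem flap_rho_pow {n a b : ℕ} {f : PolyZ n} (h : BiH a b f) (hf : flap f = 0) (j : ℕ) :
    flap (rho n ^ (j + 1) * f) = (((j + 1) * (n + a + b + j) : ℕ) : ℂ) • (rho n ^ j * f) := by
  induction j with
  | zero =>
    rw [zero_add, pow_one, flap_rho_mul h, hf]; simp
  | succ j ih =>
    rw [pow_succ', mul_assoc, flap_rho_mul ((BiH.rho_pow n (j + 1)).mul h), ih,
      mul_smul_comm, ← mul_assoc, ← pow_succ', ← add_smul]
    congr 1
    push_cast
    ring

/-- Almansi/Fischer decomposition -/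
theorem almansi {n : ℕ} (hn : 0 < n) (k : ℕ) : ∀ (a b : ℕ) (f : PolyZ n), k ≤ a → k ≤ b →
    BiH a b f → (flap ^ (k + 1)) f = 0 →
    ∃ R : ℕ → PolyZ n, (∀ j ≤ k, BiH (a - j) (b - j) (R j) ∧ flap (R j) = 0) ∧
      f = ∑ j ∈ Finset.range (k + 1), rho n ^ j * R j := by
  induction k with
  | zero =>
    intro a b f _ _ h h0
    refine ⟨fun _ => f, ?_, by simp⟩
    intro j hj
    obtain rfl : j = 0 := by omega
    exact ⟨by simpa using h, by simpa using h0⟩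
  | succ k ih =>
    intro a b f ha hb h h0
    obtain ⟨a, rfl⟩ : ∃ a', a = a' + 1 := ⟨a - 1, by omega⟩
    obtain ⟨b, rfl⟩ : ∃ b', b = b' + 1 := ⟨b - 1, by omega⟩
    obtain ⟨R, hR, hs⟩ := ih a b (flap f) (by omega) (by omega) h.flap
      (by rw [pow_succ, Module.End.mul_apply] at h0; exact h0)
    set c : ℕ → ℂ := fun j => (((j + 1) * (n + (a - j) + (b - j) + j) : ℕ) : ℂ) with hc
    have hc0 : ∀ j, c j ≠ 0 := by
      intro j
      rw [hc]
      simp only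
      rw [Nat.cast_ne_zero]
      have : 0 < (j + 1) * (n + (a - j) + (b - j) + j) := by positivity
      omega
    set S : ℕ → PolyZ n := fun j => (c j)⁻¹ • R j with hS
    set F : PolyZ n := ∑ j ∈ Finset.range (k + 1), rho n ^ (j + 1) * S j with hF
    have hSB : ∀ j ≤ k, BiH (a - j) (b - j) (S j) ∧ flap (S j) = 0 := by
      intro j hj
      refine ⟨(hR j hj).1.smul _, ?_⟩
      rw [hS]; simp only; rw [map_smul, (hR j hj).2, smul_zero]
    have hFB : BiH (a + 1) (b + 1) F := by
      refine BiH.sum _ _ fun j hj => ?_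
      have hj : j ≤ k := by simp at hj; omega
      have := (BiH.rho_pow n (j + 1)).mul (hSB j hj).1
      rwa [show j + 1 + (a - j) = a + 1 by omega, show j + 1 + (b - j) = b + 1 by omega] at this
    have hFl : flap F = flap f := by
      rw [hs, hF, map_sum]
      refine Finset.sum_congr rfl fun j hj => ?_
      have hj : j ≤ k := by simp at hj; omega
      rw [flap_rho_pow (hSB j hj).1 (hSB j hj).2]
      change c j • (rho n ^ j * ((c j)⁻¹ • R j)) = _
      rw [mul_smul_comm, smul_smul, mul_inv_cancel₀ (hc0 j), one_smul]
    refine ⟨fun j => Nat.casesOn j (f - F) S, ?_, ?_⟩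
    · intro j hj
      rcases j with _ | j
      · exact ⟨h.sub hFB, by simp [map_sub, hFl]⟩
      · have := hSB j (by omega)
        simpa using this
    · rw [Finset.sum_range_succ']
      simp [← hF]

/-! ### transfer to functions -/

theorem evz_X_inl {n : ℕ} (z : Fin n → ℂ) (k : Fin n) : evz z (X (Sum.inl k)) = z k := by
  simp [evz]

theorem evz_X_inr {n : ℕ} (z : Fin n → ℂ) (k : Fin n) :
    evz z (X (Sum.inr k)) = (starRingEnd ℂ) (z k) := by
  simp [evz]

theorem evz_hasFDerivAt {n : ℕ} (f : PolyZ n) (z : Fin n → ℂ) :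
    ∃ L : (Fin n → ℂ) →L[ℝ] ℂ, HasFDerivAt (fun w => evz w f) L z ∧
      ∀ v, L v = ∑ k : Fin n, (evz z (pderiv (Sum.inl k) f) * v k
        + evz z (pderiv (Sum.inr k) f) * (starRingEnd ℂ) (v k)) := by
  classical
  induction f using MvPolynomial.induction_on with
  | C a =>
    refine ⟨0, ?_, ?_⟩
    · simpa [evz] using hasFDerivAt_const (𝕜 := ℝ) a z
    · intro v; simp
  | add f g hf hg =>
    obtain ⟨L, hL, hL'⟩ := hf
    obtain ⟨M, hM, hM'⟩ := hg
    refine ⟨L + M, ?_, ?_⟩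
    · simp only [map_add]; exact hL.add hM
    · intro v
      rw [_root_.add_apply, hL', hM', ← Finset.sum_add_distrib]
      refine Finset.sum_congr rfl fun k _ => ?_
      simp only [map_add]; ring
  | mul_X f i hf =>
    obtain ⟨L, hL, hL'⟩ := hf
    obtain ⟨M, hM, hM'⟩ : ∃ M : (Fin n → ℂ) →L[ℝ] ℂ, HasFDerivAt (fun w => evz w (X i)) M z ∧
      ∀ v, M v = ∑ k : Fin n, (evz z (pderiv (Sum.inl k) (X i)) * v k
        + evz z (pderiv (Sum.inr k) (X i)) * (starRingEnd ℂ) (v k)) := by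
      rcases i with i | i
      · refine ⟨ContinuousLinearMap.proj i, ?_, ?_⟩
        · simp only [evz_X_inl]
          exact (ContinuousLinearMap.proj (R := ℝ) (φ := fun _ : Fin n => ℂ) i).hasFDerivAt
        · intro v
          simp [Pi.single_apply, apply_ite (evz z)]
      · refine ⟨(Complex.conjCLE : ℂ →L[ℝ] ℂ).comp (ContinuousLinearMap.proj i), ?_, ?_⟩
        · simp only [evz_X_inr]
          exact ((Complex.conjCLE : ℂ →L[ℝ] ℂ).comp
            (ContinuousLinearMap.proj (R := ℝ) (φ := fun _ : Fin n => ℂ) i)).hasFDerivAt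
        · intro v
          simp [Pi.single_apply, apply_ite (evz z)]
    refine ⟨_, by simp only [map_mul]; exact hL.mul hM, ?_⟩
    intro v
    simp only [_root_.add_apply, _root_.smul_apply, hL', hM', smul_eq_mul,
      Finset.mul_sum, ← Finset.sum_add_distrib, pderiv_mul, map_add, map_mul]
    refine Finset.sum_congr rfl fun k _ => ?_
    ring

theorem wderiv_evz {n : ℕ} (f : PolyZ n) (k : Fin n) (z : Fin n → ℂ) :
    wderiv k (fun w => evz w f) z = evz z (pderiv (Sum.inl k) f) := by
  classical
  obtain ⟨L, hL, hL'⟩ := evz_hasFDerivAt f z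
  rw [wderiv, hL.fderiv, hL', hL']
  simp only [Pi.single_apply, apply_ite (starRingEnd ℂ), mul_ite, map_one, map_zero, Complex.conj_I,
    mul_one, mul_zero, Finset.sum_add_distrib, Finset.sum_ite_eq', Finset.mem_univ, if_true]
  linear_combination (-1 / 2 * evz z (pderiv (Sum.inl k) f)
    + 1 / 2 * evz z (pderiv (Sum.inr k) f)) * Complex.I_sq

theorem wderivBar_evz {n : ℕ} (f : PolyZ n) (k : Fin n) (z : Fin n → ℂ) :
    wderivBar k (fun w => evz w f) z = evz z (pderiv (Sum.inr k) f) := by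
  classical
  obtain ⟨L, hL, hL'⟩ := evz_hasFDerivAt f z
  rw [wderivBar, hL.fderiv, hL', hL']
  simp only [Pi.single_apply, apply_ite (starRingEnd ℂ), mul_ite, map_one, map_zero, Complex.conj_I,
    mul_one, mul_zero, Finset.sum_add_distrib, Finset.sum_ite_eq', Finset.mem_univ, if_true]
  linear_combination (1 / 2 * evz z (pderiv (Sum.inl k) f)
    - 1 / 2 * evz z (pderiv (Sum.inr k) f)) * Complex.I_sq

theorem lap_evz {n : ℕ} (f : PolyZ n) (z : Fin n → ℂ) :
    lap (fun w => evz w f) z = 4 * evz z (flap f) := by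
  rw [lap, flap_apply, map_sum]
  simp only [wderivBar_evz, wderiv_evz]

theorem evz_inj {n : ℕ} {f : PolyZ n} (h : ∀ z, evz z f = 0) : f = 0 := by
  -- substitute z = x + i y, z̄ = x - i y
  let φ : PolyZ n →ₐ[ℂ] PolyZ n := bind₁ (Sum.elim
    (fun k => X (Sum.inl k) + C I * X (Sum.inr k)) (fun k => X (Sum.inl k) - C I * X (Sum.inr k)))
  let ψ : PolyZ n →ₐ[ℂ] PolyZ n := bind₁ (Sum.elim
    (fun k => C (1 / 2) * (X (Sum.inl k) + X (Sum.inr k)))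
    (fun k => C (-I / 2) * (X (Sum.inl k) - X (Sum.inr k))))
  have hI : (C I * C I : PolyZ n) = -1 := by rw [← C_mul, I_mul_I]; simp
  have h2 : (C (1 / 2) * 2 : PolyZ n) = 1 := by
    rw [show (2 : PolyZ n) = C 2 from (map_ofNat C 2).symm, ← C_mul]; simp
  have hI2 : (C (-I / 2) : PolyZ n) = - C I * C (1 / 2) := by
    rw [← C_neg, ← C_mul]; congr 1; ring
  have hψφ : ψ.comp φ = AlgHom.id ℂ _ := by
    apply MvPolynomial.algHom_ext
    rintro (k | k)
    · simp only [φ, ψ, AlgHom.comp_apply, bind₁_X_right, Sum.elim_inl, Sum.elim_inr, map_add, map_mul,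
        bind₁_C_right, AlgHom.id_apply, hI2]
      linear_combination (X (Sum.inl k)) * h2 - C (1 / 2) * (X (Sum.inl k) - X (Sum.inr k)) * hI
    · simp only [φ, ψ, AlgHom.comp_apply, bind₁_X_right, Sum.elim_inl, Sum.elim_inr, map_sub, map_mul,
        bind₁_C_right, AlgHom.id_apply, hI2]
      linear_combination (X (Sum.inr k)) * h2 + C (1 / 2) * (X (Sum.inl k) - X (Sum.inr k)) * hI
  have h0 : φ f = 0 := by
    apply MvPolynomial.funext_set (fun _ => Set.range ((↑) : ℝ → ℂ))
      (fun _ => Set.infinite_range_of_injective Complex.ofReal_injective)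
    intro x hx
    choose r hr using fun i => hx i (Set.mem_univ i)
    have := h (fun k => x (Sum.inl k) + I * x (Sum.inr k))
    rw [map_zero, ← this]
    simp only [φ, evz, eval, eval₂Hom_bind₁]
    congr 2
    funext i
    rcases i with i | i
    · simp
    · simp [← hr]
      ring
  have := congrArg (fun g => g f) hψφ
  simp only [AlgHom.comp_apply, h0, map_zero, AlgHom.id_apply] at this
  exact this.symm

def scl {n : ℕ} (c d : ℂ) : PolyZ n →ₐ[ℂ] PolyZ n :=
  bind₁ (fun i => C (Sum.elim (fun _ => c) (fun _ => d) i) * X i)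

theorem scl_monomial {n : ℕ} (c d : ℂ) (s : Fin n ⊕ Fin n →₀ ℕ) (r : ℂ) :
    scl c d (monomial s r)
      = C (c ^ (Finsupp.weight (wtA n) s) * d ^ (Finsupp.weight (wtB n) s)) * monomial s r := by
  classical
  induction s using Finsupp.induction_linear generalizing r with
  | zero => simp [scl]
  | add s t hs ht =>
    have e : (monomial (s + t) r : PolyZ n) = monomial s r * monomial t 1 := by
      rw [monomial_mul, mul_one]
    rw [e, map_mul, hs, ht, map_add, map_add]
    simp only [pow_add, C_mul]; ring
  | single i k =>
    have e : (monomial (Finsupp.single i k) r : PolyZ n) = C r * X i ^ k := by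
      rw [X_pow_eq_monomial, C_mul_monomial, mul_one]
    rw [e, Finsupp.weight_single, Finsupp.weight_single]
    rcases i with i | i <;> simp [scl, wtA, wtB, mul_pow] <;> ring

theorem coeff_scl {n : ℕ} (c d : ℂ) (s : Fin n ⊕ Fin n →₀ ℕ) (f : PolyZ n) :
    coeff s (scl c d f)
      = (c ^ (Finsupp.weight (wtA n) s) * d ^ (Finsupp.weight (wtB n) s)) * coeff s f := by
  classical
  induction f using MvPolynomial.induction_on' with
  | monomial u a =>
    rw [scl_monomial, coeff_C_mul, coeff_monomial]
    split_ifs with h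
    · rw [h]
    · simp
  | add p q hp hq => rw [map_add, coeff_add, coeff_add, hp, hq]; ring

theorem evz_scl {n : ℕ} (c : ℂ) (z : Fin n → ℂ) (f : PolyZ n) :
    evz z (scl c ((starRingEnd ℂ) c) f) = evz (c • z) f := by
  simp only [scl, evz, eval, eval₂Hom_bind₁]
  congr 2
  funext i
  rcases i with i | i <;> simp

theorem BiH.biHomogeneous {n a b : ℕ} {f : PolyZ n} (h : BiH a b f) :
    BiHomogeneous a b (fun z => evz z f) := by
  intro c z
  have : scl c ((starRingEnd ℂ) c) f = C (c ^ a * (starRingEnd ℂ) c ^ b) * f := by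
    ext s
    rw [coeff_scl, coeff_C_mul]
    by_cases hs : coeff s f = 0
    · simp [hs]
    · rw [h.1 hs, h.2 hs]
  simp only
  rw [← evz_scl, this, map_mul]
  simp [evz]

theorem exp_key {i j p q : ℕ}
    (h : (Complex.exp (1 + I)) ^ i * (starRingEnd ℂ) (Complex.exp (1 + I)) ^ j
      = (Complex.exp (1 + I)) ^ p * (starRingEnd ℂ) (Complex.exp (1 + I)) ^ q) :
    i = p ∧ j = q := by
  rw [← Complex.exp_conj, ← Complex.exp_nat_mul, ← Complex.exp_nat_mul, ← Complex.exp_nat_mul,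
    ← Complex.exp_nat_mul, ← Complex.exp_add, ← Complex.exp_add, Complex.exp_eq_exp_iff_exists_int] at h
  obtain ⟨N, hN⟩ := h
  have hre := congrArg Complex.re hN
  have him := congrArg Complex.im hN
  simp at hre him
  have h1 : i + j = p + q := by exact_mod_cast hre
  have hN0 : N = 0 := by
    by_contra hN0
    apply irrational_pi
    refine ⟨((i : ℚ) - j - p + q) / (2 * N), ?_⟩
    have : (N : ℝ) ≠ 0 := by exact_mod_cast hN0
    push_cast
    field_simp
    linarith
  subst hN0
  have h2 : (i : ℝ) + q = p + j := by simp at him; linarith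
  have h2 : i + q = p + j := by exact_mod_cast h2
  omega

theorem BiH.of_biHomogeneous {n a b : ℕ} {f : PolyZ n}
    (h : BiHomogeneous a b (fun z => evz z f)) : BiH a b f := by
  set c := Complex.exp (1 + I) with hc
  have key : scl c ((starRingEnd ℂ) c) f - C (c ^ a * (starRingEnd ℂ) c ^ b) * f = 0 := by
    apply evz_inj
    intro z
    have := h c z
    simp only at this
    rw [map_sub, evz_scl, this, map_mul]
    simp [evz]
  have : ∀ s, coeff s f ≠ 0 → Finsupp.weight (wtA n) s = a ∧ Finsupp.weight (wtB n) s = b := by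
    intro s hs
    have h1 := congrArg (coeff s) (sub_eq_zero.mp key)
    rw [coeff_scl, coeff_C_mul] at h1
    exact exp_key (mul_right_cancel₀ hs h1)
  exact ⟨fun s hs => (this s hs).1, fun s hs => (this s hs).2⟩

theorem to_poly {n a b : ℕ} {F : (Fin n → ℂ) → ℂ} (h : IsBigradedHarmonic a b F) :
    ∃ f : PolyZ n, F = (fun z => evz z f) ∧ BiH a b f ∧ flap f = 0 := by
  obtain ⟨⟨f, hf⟩, h2, h3⟩ := h
  have e : F = fun z => evz z f := funext hf
  subst e
  refine ⟨f, rfl, BiH.of_biHomogeneous h2, evz_inj fun z => ?_⟩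
  have := h3 z
  rw [lap_evz] at this
  simpa using this

theorem of_poly {n a b : ℕ} {f : PolyZ n} (h : BiH a b f) (h0 : flap f = 0) :
    IsBigradedHarmonic a b (fun z => evz z f) :=
  ⟨⟨f, fun _ => rfl⟩, h.biHomogeneous, fun z => by rw [lap_evz, h0]; simp⟩

theorem evz_rho {n : ℕ} (z : Fin n → ℂ) : evz z (rho n) = nsq z := by
  simp [rho, nsq, evz]

theorem stmt5 {n : ℕ} (p q l m : ℕ) (P Q : (Fin n → ℂ) → ℂ)
    (hP : IsBigradedHarmonic p q P) (hQ : IsBigradedHarmonic l m Q) :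
    ∃ R : ℕ → ((Fin n → ℂ) → ℂ),
      (∀ j ≤ min p m + min l q, IsBigradedHarmonic (p + l - j) (q + m - j) (R j)) ∧
        ∀ z, P z * Q z = ∑ j ∈ Finset.range (min p m + min l q + 1), nsq z ^ j * R j z := by
  obtain ⟨f, rfl, hf, hf0⟩ := to_poly hP
  obtain ⟨g, rfl, hg, hg0⟩ := to_poly hQ
  have hfg := hf.mul hg
  suffices H : ∃ R : ℕ → PolyZ n, (∀ j ≤ min p m + min l q,
      BiH (p + l - j) (q + m - j) (R j) ∧ flap (R j) = 0) ∧
      f * g = ∑ j ∈ Finset.range (min p m + min l q + 1), rho n ^ j * R j by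
    obtain ⟨R, hR, hs⟩ := H
    refine ⟨fun j z => evz z (R j), fun j hj => of_poly (hR j hj).1 (hR j hj).2, fun z => ?_⟩
    have := congrArg (evz z) hs
    simpa [map_sum, evz_rho] using this
  rcases Nat.eq_zero_or_pos n with rfl | hn
  · refine ⟨fun j => if j = 0 then f * g else 0, fun j _ => ?_, ?_⟩
    · rcases j with _ | j
      · exact ⟨by simpa using hfg, by simp [flap_apply]⟩
      · exact ⟨by simpa using BiH.zero, by simp⟩
    · rw [Finset.sum_range_succ']; simp
  · exact almansi hn _ _ _ _ (by omega) (by omega) hfg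
      (flap_iter _ p q l m f g hf hg hf0 hg0 (by omega))
end
end

section
/- Let g(z) = ρ^{k−d−2i} Y_k(ω) on ℝ^d ∖ B̄_B(0), where z = ρω, Y_k is a spherical harmonic of degree k > 0 on S^{d−1}, and 0 ≤ i ≤ k−1. Then the Euclidean spherical means of g vanish: ∫_{|y|=s} g(x+y) dσ_s(y) = 0 whenever s > |x| + B. -/
open MeasureTheory

noncomputable section

/-- Normalized surface measure on the sphere of radius `s` centered at the origin in ℝ^d. -/
def sphMeasR (d : ℕ) (s : ℝ) : Measure (EuclideanSpace ℝ (Fin d)) :=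
  (μH[d - 1] (Metric.sphere (0 : EuclideanSpace ℝ (Fin d)) s))⁻¹ •
    (μH[d - 1]).restrict (Metric.sphere (0 : EuclideanSpace ℝ (Fin d)) s)

/-- The Euclidean Laplacian on ℝ^d as the sum of second directional derivatives
along the standard orthonormal basis. -/
def lapR {d : ℕ} (f : EuclideanSpace ℝ (Fin d) → ℝ) (x : EuclideanSpace ℝ (Fin d)) : ℝ :=
  ∑ i, fderiv ℝ (fun w => fderiv ℝ f w (EuclideanSpace.single i (1 : ℝ))) x
      (EuclideanSpace.single i (1 : ℝ))

set_option linter.unusedSectionVars false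

section general
open Set Metric Measure
open scoped Pointwise
variable {E : Type*} [NormedAddCommGroup E] [InnerProductSpace ℝ E] [FiniteDimensional ℝ E]
  [MeasurableSpace E] [BorelSpace E]

/-- The surface measure on the unit sphere, as a measure on the ambient space. -/
def nuS (E : Type*) [NormedAddCommGroup E] [InnerProductSpace ℝ E] [FiniteDimensional ℝ E]
  [MeasurableSpace E] [BorelSpace E] : Measure E :=
  (volume : Measure E).toSphere.map Subtype.val

instance : IsFiniteMeasure (nuS E) := by unfold nuS; infer_instance

lemma nuS_emb : MeasurableEmbedding (Subtype.val : sphere (0:E) 1 → E) :=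
  MeasurableEmbedding.subtype_coe isClosed_sphere.measurableSet

lemma nuS_integral (f : E → ℝ) : ∫ w, f w ∂(nuS E) = ∫ w, f w ∂((volume : Measure E).toSphere) := by
  unfold nuS
  rw [nuS_emb.integral_map]

lemma nuS_integrable {f : E → ℝ} (hf : ContinuousOn f (sphere (0:E) 1)) : Integrable f (nuS E) := by
  unfold nuS
  rw [nuS_emb.integrable_map_iff]
  have : CompactSpace (sphere (0:E) 1) := isCompact_iff_compactSpace.1 (isCompact_sphere _ _)
  have h2 : Continuous (f ∘ (Subtype.val : sphere (0:E) 1 → E)) := by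
    exact continuousOn_iff_continuous_domRestrict.1 hf
  exact h2.integrable_of_hasCompactSupport (HasCompactSupport.of_compactSpace _)

lemma nuS_ae : ∀ᵐ w ∂(nuS E), ‖w‖ = 1 := by
  unfold nuS
  rw [nuS_emb.ae_map_iff]
  filter_upwards with w
  simp

lemma nuS_apply {T : Set E} (hT : MeasurableSet T) : nuS E T =
    Module.finrank ℝ E * volume (Ioo (0:ℝ) 1 • (sphere (0:E) 1 ∩ T)) := by
  unfold nuS
  rw [nuS_emb.map_apply, Measure.toSphere_apply' _ (nuS_emb.measurable hT),
    Subtype.image_preimage_coe]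

lemma nuS_inv (A : E ≃ₗᵢ[ℝ] E) : (nuS E).map A = nuS E := by
  ext T hT
  have hm : Measurable A := A.continuous.measurable
  rw [Measure.map_apply hm hT, nuS_apply (hm hT), nuS_apply hT]
  congr 1
  rw [← A.measurePreserving.measure_preimage_emb A.toHomeomorph.measurableEmbedding
    (Ioo (0:ℝ) 1 • (sphere (0:E) 1 ∩ T))]
  congr 1
  ext z
  simp only [Set.mem_smul, mem_preimage, mem_inter_iff, mem_sphere_iff_norm, sub_zero]
  constructor
  · rintro ⟨r, hr, y, ⟨hy, hyT⟩, rfl⟩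
    exact ⟨r, hr, A y, ⟨by simpa using hy, hyT⟩, by simp⟩
  · rintro ⟨r, hr, y, ⟨hy, hyT⟩, h⟩
    refine ⟨r, hr, A.symm y, ⟨by simpa using hy, by simpa using hyT⟩, ?_⟩
    apply A.injective
    simpa using h

lemma nuS_integral_comp (A : E ≃ₗᵢ[ℝ] E) (f : E → ℝ) :
    ∫ w, f (A w) ∂(nuS E) = ∫ w, f w ∂(nuS E) := by
  conv_rhs => rw [← nuS_inv A]
  have hemb : MeasurableEmbedding A := A.toHomeomorph.measurableEmbedding
  rw [hemb.integral_map]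

variable [Nontrivial E]

lemma nuS_univ_ne : nuS E univ ≠ 0 := by
  unfold nuS
  rw [nuS_emb.map_apply, preimage_univ, Measure.measure_univ_ne_zero]
  exact Measure.toSphere_ne_zero _

lemma volIoiPow_integral (n : ℕ) (f : ℝ → ℝ) : ∫ r : Ioi (0:ℝ), f r ∂(Measure.volumeIoiPow n)
    = ∫ r in Ioi (0:ℝ), r ^ n * f r := by
  simp only [Measure.volumeIoiPow, ENNReal.ofReal]
  rw [integral_withDensity_eq_integral_smul,
    integral_subtype_comap measurableSet_Ioi fun a ↦ Real.toNNReal (a ^ n) • f a,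
    setIntegral_congr_fun measurableSet_Ioi fun x hx ↦ ?_]
  · rw [NNReal.smul_def, Real.coe_toNNReal _ (pow_nonneg hx.out.le _)]; rfl
  · exact (measurable_subtype_coe.pow_const _).real_toNNReal

lemma polar_aux {f : E → ℝ} (hf : Integrable f) :
    Integrable (fun p : sphere (0:E) 1 × Ioi (0:ℝ) => f ((p.2:ℝ) • (p.1:E)))
      ((volume : Measure E).toSphere.prod (.volumeIoiPow (Module.finrank ℝ E - 1))) ∧
    ∫ z, f z = ∫ p : sphere (0:E) 1 × Ioi (0:ℝ), f ((p.2:ℝ) • (p.1:E))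
      ∂((volume : Measure E).toSphere.prod (.volumeIoiPow (Module.finrank ℝ E - 1))) := by
  have hmp := (volume : Measure E).measurePreserving_homeomorphUnitSphereProd
  have hcomp : (fun p : sphere (0:E) 1 × Ioi (0:ℝ) => f ((p.2:ℝ) • (p.1:E))) ∘
      (homeomorphUnitSphereProd E) = fun z : ({0}ᶜ : Set E) => f z := by
    ext z
    have : (z:E) ≠ 0 := z.2
    have h3 : ‖(z:E)‖ ≠ 0 := norm_ne_zero_iff.2 this
    simp [homeomorphUnitSphereProd, smul_smul, h3]
  constructor
  · rw [← hmp.integrable_comp_emb (Homeomorph.measurableEmbedding _), hcomp]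
    have := hf.integrableOn (s := ({0}ᶜ : Set E))
    rw [integrableOn_iff_comap_subtypeVal (by measurability)] at this
    exact this
  · rw [← hmp.integral_comp (Homeomorph.measurableEmbedding _)]
    have := integral_subtype_comap (μ := (volume : Measure E))
      (measurableSet_singleton (0:E)).compl f
    rw [restrict_compl_singleton] at this
    rw [← this]
    congr 1
    exact hcomp.symm

lemma polar1 {f : E → ℝ} (hf : Integrable f) :
    ∫ z, f z = ∫ w, (∫ r in Ioi (0:ℝ), r ^ (Module.finrank ℝ E - 1) * f (r • w)) ∂(nuS E) := by
  obtain ⟨h1, h2⟩ := polar_aux hf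
  rw [h2, integral_prod _ h1, nuS_integral]
  congr 1
  ext w
  exact volIoiPow_integral _ (fun r => f (r • (w:E)))

lemma polar2 {f : E → ℝ} (hf : Integrable f) :
    ∫ z, f z = ∫ r in Ioi (0:ℝ), r ^ (Module.finrank ℝ E - 1) * ∫ w, f (r • w) ∂(nuS E) := by
  obtain ⟨h1, h2⟩ := polar_aux hf
  rw [h2, integral_prod_symm _ h1, ← volIoiPow_integral]
  congr 1
  ext r
  rw [nuS_integral]

/-- Uniqueness of rotation invariant measures on the unit sphere. -/
lemma sphere_unique (μ ν : Measure E) [IsProbabilityMeasure μ] [IsProbabilityMeasure ν]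
    (hμ : ∀ A : E ≃ₗᵢ[ℝ] E, μ.map A = μ) (hν : ∀ A : E ≃ₗᵢ[ℝ] E, ν.map A = ν)
    (hμ1 : ∀ᵐ w ∂μ, ‖w‖ = 1) (hν1 : ∀ᵐ w ∂ν, ‖w‖ = 1) : μ = ν := by
  have key : ∀ (ρ : Measure E) (_ : ∀ A : E ≃ₗᵢ[ℝ] E, ρ.map A = ρ) (a b : E), ‖a‖ = ‖b‖ →
      charFun ρ a = charFun ρ b := by
    intro ρ hρ a b hab
    set A := (Submodule.reflection (Submodule.span ℝ {a - b})ᗮ) with hA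
    have hAa : A a = b := Submodule.reflection_sub hab
    rw [charFun_apply, charFun_apply]
    conv_rhs => rw [← hρ A]
    have hemb : MeasurableEmbedding A := A.toHomeomorph.measurableEmbedding
    rw [hemb.integral_map]
    congr 1
    ext w
    rw [← hAa]
    simp
  apply Measure.ext_of_charFun
  ext t
  -- both sides equal the double integral
  have hint : Integrable (fun p : E × E => Complex.exp (inner ℝ p.1 (‖t‖ • p.2) * Complex.I)) (μ.prod ν) := by
    refine Integrable.of_bound (C := 1) ?_ ?_
    · apply Continuous.aestronglyMeasurable; fun_prop
    · filter_upwards with p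
      rw [Complex.norm_exp_ofReal_mul_I]
  have hswap := integral_integral_swap (f := fun x y => Complex.exp (inner ℝ x (‖t‖ • y) * Complex.I)) hint
  have e1 : ∀ᵐ x ∂μ, ∫ y, Complex.exp (inner ℝ x (‖t‖ • y) * Complex.I) ∂ν = charFun ν t := by
    filter_upwards [hμ1] with x hx
    rw [key ν hν t (‖t‖ • x) (by simp [norm_smul, hx]), charFun_apply]
    congr 1; ext y
    rw [inner_smul_right, inner_smul_right, real_inner_comm]
  have e2 : ∀ᵐ y ∂ν, ∫ x, Complex.exp (inner ℝ x (‖t‖ • y) * Complex.I) ∂μ = charFun μ t := by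
    filter_upwards [hν1] with y hy
    rw [key μ hμ t (‖t‖ • y) (by simp [norm_smul, hy]), charFun_apply]
  rw [integral_congr_ae e1, integral_congr_ae e2] at hswap
  simpa using hswap.symm

end general
section ortho
open Set Metric Measure
variable {d : ℕ}

/-- Directional derivative. -/
def dirD (v : EuclideanSpace ℝ (Fin d)) (f : EuclideanSpace ℝ (Fin d) → ℝ) :
    EuclideanSpace ℝ (Fin d) → ℝ := fun w => fderiv ℝ f w v

/-- Positive homogeneity of integer degree. -/
def Homog (n : ℤ) (f : EuclideanSpace ℝ (Fin d) → ℝ) : Prop :=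
  ∀ c : ℝ, 0 < c → ∀ z, f (c • z) = c ^ n * f z

lemma dirD_smooth {f : EuclideanSpace ℝ (Fin d) → ℝ} (hf : ContDiff ℝ (⊤ : ℕ∞) f)
    (v : EuclideanSpace ℝ (Fin d)) : ContDiff ℝ (⊤ : ℕ∞) (dirD v f) := by
  unfold dirD
  exact (hf.fderiv_right (m := (⊤ : ℕ∞)) (by exact_mod_cast le_rfl)).clm_apply contDiff_const

lemma dirD_homog {f : EuclideanSpace ℝ (Fin d) → ℝ} (hf : ContDiff ℝ (⊤ : ℕ∞) f) {n : ℤ}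
    (h : Homog n f) (v : EuclideanSpace ℝ (Fin d)) : Homog (n - 1) (dirD v f) := by
  intro c hc z
  have hd : Differentiable ℝ f := hf.differentiable (by simp)
  have h1 : HasFDerivAt (fun z => f (c • z)) ((fderiv ℝ f (c • z)).comp (c • ContinuousLinearMap.id ℝ _)) z :=
    (hd (c • z)).hasFDerivAt.comp z ((hasFDerivAt_id z).const_smul c)
  have h2 : HasFDerivAt (fun z => f (c • z)) (c ^ n • fderiv ℝ f z) z := by
    have : (fun z => f (c • z)) = fun z => c ^ n * f z := by ext z; exact h c hc z
    rw [this]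
    exact (hd z).hasFDerivAt.const_mul _
  have h3 := congrArg (fun L => L v) (h1.unique h2)
  simp at h3
  unfold dirD
  rw [zpow_sub_one₀ hc.ne']
  field_simp
  linarith

lemma dirD_comm {f : EuclideanSpace ℝ (Fin d) → ℝ} (hf : ContDiff ℝ (⊤ : ℕ∞) f)
    (u v : EuclideanSpace ℝ (Fin d)) : dirD u (dirD v f) = dirD v (dirD u f) := by
  ext z
  have hd : Differentiable ℝ (fderiv ℝ f) :=
    (hf.fderiv_right (m := (⊤ : ℕ∞)) (by exact_mod_cast le_rfl)).differentiable (by simp)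
  have key : ∀ a b, dirD a (dirD b f) z = fderiv ℝ (fderiv ℝ f) z a b := by
    intro a b
    unfold dirD
    have := ((hd z).hasFDerivAt.clm_apply (hasFDerivAt_const b z)).fderiv
    rw [this]; simp
  rw [key, key]
  have hs : IsSymmSndFDerivAt ℝ f z := hf.contDiffAt.isSymmSndFDerivAt (by
    simp only [minSmoothness_of_isRCLikeNormedField]; exact WithTop.coe_le_coe.2 (le_top : (2:ℕ∞) ≤ ⊤))
  exact hs u v

lemma lapR_eq (f : EuclideanSpace ℝ (Fin d) → ℝ) (z : EuclideanSpace ℝ (Fin d)) : lapR f z =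
    ∑ i, dirD (EuclideanSpace.single i (1:ℝ)) (dirD (EuclideanSpace.single i (1:ℝ)) f) z := rfl

lemma dirD_harm {f : EuclideanSpace ℝ (Fin d) → ℝ} (hf : ContDiff ℝ (⊤ : ℕ∞) f)
    (h : ∀ z, lapR f z = 0) (v z : EuclideanSpace ℝ (Fin d)) : lapR (dirD v f) z = 0 := by
  rw [lapR_eq]
  have h1 : ∀ i : Fin d, dirD (EuclideanSpace.single i (1:ℝ)) (dirD (EuclideanSpace.single i (1:ℝ)) (dirD v f))
    = dirD v (dirD (EuclideanSpace.single i (1:ℝ)) (dirD (EuclideanSpace.single i (1:ℝ)) f)) := by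
    intro i
    rw [dirD_comm hf _ v, dirD_comm (dirD_smooth hf _) _ v]
  simp only [h1]
  have h2 : lapR f = fun _ => 0 := funext h
  have h3 : fderiv ℝ (lapR f) z v = 0 := by rw [h2]; simp
  have h4 : lapR f = fun z => ∑ i, dirD (EuclideanSpace.single i (1:ℝ)) (dirD (EuclideanSpace.single i (1:ℝ)) f) z := rfl
  rw [h4, fderiv_fun_sum] at h3
  · simpa [dirD] using h3
  · intro i _
    exact ((dirD_smooth (dirD_smooth hf _) _).differentiable (by simp)) z

/-- Gaussian weight. -/
def gw (z : EuclideanSpace ℝ (Fin d)) : ℝ := Real.exp (-(1/2) * ‖z‖ ^ 2)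

lemma euler {f : EuclideanSpace ℝ (Fin d) → ℝ} (hf : ContDiff ℝ (⊤ : ℕ∞) f) {n : ℤ}
    (h : Homog n f) (z : EuclideanSpace ℝ (Fin d)) : dirD z f z = n * f z := by
  have hd : Differentiable ℝ f := hf.differentiable (by simp)
  have h1 : HasDerivAt (fun c : ℝ => f (c • z)) (fderiv ℝ f ((1:ℝ) • z) ((1:ℝ) • z)) 1 :=
    (hd ((1:ℝ) • z)).hasFDerivAt.comp_hasDerivAt (1:ℝ) ((hasDerivAt_id (1:ℝ)).smul_const z)
  have h2 : HasDerivAt (fun c : ℝ => f (c • z)) (((n:ℝ) * (1:ℝ) ^ (n - 1)) * f z) 1 := by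
    have h3 := (hasDerivAt_zpow n (1:ℝ) (Or.inl one_ne_zero)).mul_const (f z)
    refine h3.congr_of_eventuallyEq ?_
    filter_upwards [lt_mem_nhds (zero_lt_one (α := ℝ))] with c hc
    exact h c hc z
  have := h1.unique h2
  simpa [dirD] using this

variable [Nontrivial (EuclideanSpace ℝ (Fin d))]

lemma integrable_pow_gw (n : ℕ) : Integrable (fun z : EuclideanSpace ℝ (Fin d) => ‖z‖ ^ n * gw z) := by
  have := (integrable_fun_norm_addHaar (volume : Measure (EuclideanSpace ℝ (Fin d)))
    (f := fun r => r ^ n * Real.exp (-(1/2) * r ^ 2))).2 ?_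
  · exact this
  · have h := integrableOn_rpow_mul_exp_neg_mul_sq (b := 1/2) (by norm_num)
      (s := ((Module.finrank ℝ (EuclideanSpace ℝ (Fin d)) - 1 + n : ℕ) : ℝ)) (by
        have : (0:ℝ) ≤ ((Module.finrank ℝ (EuclideanSpace ℝ (Fin d)) - 1 + n : ℕ) : ℝ) := Nat.cast_nonneg _
        linarith)
    refine h.congr_fun ?_ measurableSet_Ioi
    intro r _
    simp only [Real.rpow_natCast, smul_eq_mul, pow_add]
    ring

lemma integrable_homog {f : EuclideanSpace ℝ (Fin d) → ℝ} (hf : Continuous f) {n : ℤ}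
    (h : Homog n f) : Integrable (fun z => f z * gw z) := by
  obtain ⟨C, hC⟩ := (isCompact_closedBall (0 : EuclideanSpace ℝ (Fin d)) 1).exists_bound_of_continuousOn
    hf.continuousOn
  have hcg : Continuous (gw (d := d)) := by unfold gw; fun_prop
  have hC0 : 0 ≤ C := (norm_nonneg _).trans (hC 0 (by simp))
  have hint : Integrable (fun z : EuclideanSpace ℝ (Fin d) =>
      C * (‖z‖ ^ 0 * gw z) + C * (‖z‖ ^ n.natAbs * gw z)) :=
    ((integrable_pow_gw 0).const_mul C).add ((integrable_pow_gw n.natAbs).const_mul C)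
  refine hint.mono' (hf.mul hcg).aestronglyMeasurable ?_
  filter_upwards with z
  have hg : 0 < gw z := Real.exp_pos _
  rw [norm_mul, Real.norm_of_nonneg hg.le]
  have : ‖f z‖ ≤ C * 1 + C * ‖z‖ ^ n.natAbs := by
    rcases le_or_gt ‖z‖ 1 with hz | hz
    · have := hC z (by simpa using hz)
      have : 0 ≤ C * ‖z‖ ^ n.natAbs := by positivity
      linarith
    · have hz0 : 0 < ‖z‖ := by linarith
      have h1 := h ‖z‖ hz0 (‖z‖⁻¹ • z)
      rw [smul_smul, mul_inv_cancel₀ hz0.ne', one_smul] at h1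
      have h2 := hC (‖z‖⁻¹ • z) (by simp [norm_smul, hz0.ne'])
      rw [h1, norm_mul, Real.norm_of_nonneg (by positivity : (0:ℝ) ≤ ‖z‖ ^ n)]
      have h3 : ‖z‖ ^ n ≤ ‖z‖ ^ n.natAbs := by
        rw [← zpow_natCast]
        exact zpow_le_zpow_right₀ hz.le (by exact Int.le_natAbs)
      calc ‖z‖ ^ n * ‖f (‖z‖⁻¹ • z)‖ ≤ ‖z‖ ^ n.natAbs * C := by gcongr
        _ ≤ _ := by linarith
  calc ‖f z‖ * gw z ≤ (C * 1 + C * ‖z‖ ^ n.natAbs) * gw z := by gcongr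
    _ = _ := by ring

lemma gw_deriv (z v : EuclideanSpace ℝ (Fin d)) : HasFDerivAt (gw (d := d))
    (gw z • (-(1/2:ℝ)) • ((2:ℝ) • innerSL ℝ z)) z := by
  unfold gw
  have := ((hasStrictFDerivAt_norm_sq z).hasFDerivAt.const_mul (-(1/2:ℝ))).exp
  refine this.congr_fderiv ?_
  ext v
  simp

lemma green {p : EuclideanSpace ℝ (Fin d) → ℝ} (hp : ContDiff ℝ (⊤ : ℕ∞) p) {n : ℤ}
    (h : Homog n p) : (n : ℝ) * ∫ z, p z * gw z = ∫ z, lapR p z * gw z := by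
  have hgd : Differentiable ℝ (gw (d := d)) := fun z => (gw_deriv z 0).differentiableAt
  have hgi : ∀ (i : Fin d) (z : EuclideanSpace ℝ (Fin d)), fderiv ℝ gw z (EuclideanSpace.single i (1:ℝ)) = - (z i * gw z) := by
    intro i z
    rw [(gw_deriv z 0).fderiv]
    simp [PiLp.inner_apply, EuclideanSpace.inner_single_right]
    ring
  have hI : ∀ i : Fin d, Integrable (fun z => (dirD (EuclideanSpace.single i (1:ℝ)) p z * z i) * gw z) := by
    intro i
    have hc : Continuous (fun z : EuclideanSpace ℝ (Fin d) => dirD (EuclideanSpace.single i (1:ℝ)) p z * z i) :=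
      (dirD_smooth hp _).continuous.mul (by fun_prop)
    refine integrable_homog hc (n := n - 1 + 1) ?_
    intro c hc z
    have := dirD_homog hp h (EuclideanSpace.single i (1:ℝ)) c hc z
    simp only [this, PiLp.smul_apply, smul_eq_mul]
    rw [zpow_add₀ hc.ne' (n-1) 1]; simp; ring
  have hD : ∀ i : Fin d, Integrable (fun z => dirD (EuclideanSpace.single i (1:ℝ)) p z * gw z) := fun i =>
    integrable_homog (dirD_smooth hp _).continuous (dirD_homog hp h _)
  have hDD : ∀ i : Fin d, Integrable (fun z => dirD (EuclideanSpace.single i (1:ℝ)) (dirD (EuclideanSpace.single i (1:ℝ)) p) z * gw z) := fun i =>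
    integrable_homog (dirD_smooth (dirD_smooth hp _) _).continuous (dirD_homog (dirD_smooth hp _) (dirD_homog hp h _) _)
  have hparts : ∀ i : Fin d, ∫ z, dirD (EuclideanSpace.single i (1:ℝ)) (dirD (EuclideanSpace.single i (1:ℝ)) p) z * gw z
      = ∫ z, (dirD (EuclideanSpace.single i (1:ℝ)) p z * z i) * gw z := by
    intro i
    have := integral_mul_fderiv_eq_neg_fderiv_mul_of_integrable (μ := (volume : Measure (EuclideanSpace ℝ (Fin d))))
      (f := dirD (EuclideanSpace.single i (1:ℝ)) p) (g := gw) (v := EuclideanSpace.single i (1:ℝ))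
      (hDD i) (by
        refine (hI i).neg.congr ?_
        filter_upwards with z
        simp only [hgi, Pi.neg_apply]; ring) (hD i)
      (fun z _ => ((dirD_smooth hp _).differentiable (by simp)) z) (fun z _ => hgd z)
    simp only [hgi] at this
    have h2 : ∫ z, dirD (EuclideanSpace.single i (1:ℝ)) p z * -(z i * gw z) =
      - ∫ z, (dirD (EuclideanSpace.single i (1:ℝ)) p z * z i) * gw z := by
      rw [← integral_neg]; congr 1; ext z; ring
    rw [h2] at this
    exact (neg_injective this).symm
  have hL : ∫ z, lapR p z * gw z = ∑ i, ∫ z, dirD (EuclideanSpace.single i (1:ℝ)) (dirD (EuclideanSpace.single i (1:ℝ)) p) z * gw z := by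
    rw [← integral_finsetSum _ (fun i _ => hDD i)]
    congr 1; ext z; rw [lapR_eq, Finset.sum_mul]
  rw [hL, Finset.sum_congr rfl (fun i _ => hparts i), ← integral_finsetSum _ (fun i _ => hI i),
    ← integral_const_mul]
  congr 1; ext z
  rw [← Finset.sum_mul, ← mul_assoc, ← euler hp h z]
  congr 1
  unfold dirD
  conv_lhs => rw [show fderiv ℝ p z z = fderiv ℝ p z (∑ i, z i • EuclideanSpace.single i (1:ℝ)) by
    congr 1; ext j; simp [Finset.sum_apply, Pi.single_apply]]
  rw [_root_.map_sum]
  simp [mul_comm]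

lemma dirD_mul_pow {Y : EuclideanSpace ℝ (Fin d) → ℝ} (hY : ContDiff ℝ (⊤ : ℕ∞) Y) (j : ℕ)
    (x v : EuclideanSpace ℝ (Fin d)) : dirD v (fun z => inner ℝ x z ^ j * Y z) =
    fun z => (j * inner ℝ x v) * (inner ℝ x z ^ (j - 1) * Y z) + inner ℝ x z ^ j * dirD v Y z := by
  ext z
  have hd : Differentiable ℝ Y := hY.differentiable (by simp)
  have h1 : HasFDerivAt (fun z => inner ℝ x z) (innerSL ℝ x) z := (innerSL ℝ x).hasFDerivAt
  have := ((h1.pow j).mul (hd z).hasFDerivAt).fderiv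
  unfold dirD
  rw [show (fun z => inner ℝ x z ^ j * Y z) = ((fun z => inner ℝ x z ^ j) * Y) from rfl]
  rw [this]
  simp
  ring

lemma lap_mul_pow {Y : EuclideanSpace ℝ (Fin d) → ℝ} (hY : ContDiff ℝ (⊤ : ℕ∞) Y) (j : ℕ)
    (hh : ∀ z, lapR Y z = 0) (x z : EuclideanSpace ℝ (Fin d)) :
    lapR (fun z => inner ℝ x z ^ j * Y z) z =
      (j * (j - 1 : ℕ) * ‖x‖ ^ 2) * (inner ℝ x z ^ (j - 1 - 1) * Y z) +
      (2 * j) * (inner ℝ x z ^ (j - 1) * dirD x Y z) := by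
  have hsm : ∀ j : ℕ, ContDiff ℝ (⊤ : ℕ∞) (fun z => inner ℝ x z ^ j * Y z) := fun j =>
    ((contDiff_const.inner ℝ contDiff_id).pow j).mul hY
  have hsm' : ∀ (j : ℕ) v, ContDiff ℝ (⊤ : ℕ∞) (fun z => inner ℝ x z ^ j * dirD v Y z) := fun j v =>
    ((contDiff_const.inner ℝ contDiff_id).pow j).mul (dirD_smooth hY v)
  have key : ∀ v, dirD v (dirD v (fun z => inner ℝ x z ^ j * Y z)) z =
     (j * (j - 1 : ℕ) * (inner ℝ x v) ^ 2) * (inner ℝ x z ^ (j - 1 - 1) * Y z) +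
      (2 * j) * inner ℝ x z ^ (j - 1) * (inner ℝ x v * dirD v Y z) + inner ℝ x z ^ j * dirD v (dirD v Y) z := by
    intro v
    rw [dirD_mul_pow hY]
    have e1 := congrFun (dirD_mul_pow hY (j - 1) x v) z
    have e2 := congrFun (dirD_mul_pow (dirD_smooth hY v) j x v) z
    have d1 := ((hsm (j-1)).differentiable (by simp)) z
    have d2 := ((hsm' j v).differentiable (by simp)) z
    have := ((d1.hasFDerivAt.const_mul (j * inner ℝ x v)).add d2.hasFDerivAt).fderiv
    have h3 : dirD v (fun z => (j * inner ℝ x v) * (inner ℝ x z ^ (j - 1) * Y z) + inner ℝ x z ^ j * dirD v Y z) z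
      = (j * inner ℝ x v) * dirD v (fun z => inner ℝ x z ^ (j-1) * Y z) z + dirD v (fun z => inner ℝ x z ^ j * dirD v Y z) z := by
      unfold dirD at this ⊢
      rw [show (fun z => (j * inner ℝ x v) * (inner ℝ x z ^ (j - 1) * Y z) + inner ℝ x z ^ j * fderiv ℝ Y z v) = ((fun z => (j * inner ℝ x v) * (inner ℝ x z ^ (j - 1) * Y z)) + fun z => inner ℝ x z ^ j * fderiv ℝ Y z v) from rfl, this]
      simp
    rw [h3, e1, e2]
    ring
  rw [lapR_eq, Finset.sum_congr rfl (fun i _ => key _), Finset.sum_add_distrib, Finset.sum_add_distrib,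
    ← Finset.mul_sum, ← Finset.mul_sum, ← lapR_eq, hh, ← Finset.sum_mul, ← Finset.mul_sum]
  have hx : x = ∑ i, x i • EuclideanSpace.single i (1:ℝ) := by
    ext j; simp [Finset.sum_apply, Pi.single_apply]
  have s1 : ∑ i, (inner ℝ x (EuclideanSpace.single i (1:ℝ))) ^ 2 = ‖x‖ ^ 2 := by
    rw [EuclideanSpace.norm_sq_eq]; simp [EuclideanSpace.inner_single_right]
  have s2 : ∑ i, inner ℝ x (EuclideanSpace.single i (1:ℝ)) * dirD (EuclideanSpace.single i (1:ℝ)) Y z = dirD x Y z := by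
    unfold dirD
    conv_rhs => rw [hx]
    rw [_root_.map_sum]
    simp [EuclideanSpace.inner_single_right]
  rw [s1, s2]
  ring

lemma gauss_ortho (j : ℕ) : ∀ (k : ℕ) (Y : EuclideanSpace ℝ (Fin d) → ℝ), ContDiff ℝ (⊤ : ℕ∞) Y →
    j < k → Homog (k:ℤ) Y → (∀ z, lapR Y z = 0) → ∀ x, ∫ z, (inner ℝ x z ^ j * Y z) * gw z = 0 := by
  induction j using Nat.strong_induction_on with
  | _ j ih =>
  intro k Y hY hjk hh hharm x
  have hsm : ∀ j : ℕ, ContDiff ℝ (⊤ : ℕ∞) (fun z => inner ℝ x z ^ j * Y z) := fun j =>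
    ((contDiff_const.inner ℝ contDiff_id).pow j).mul hY
  have hhom : ∀ (j : ℕ) (n : ℤ) (Y : EuclideanSpace ℝ (Fin d) → ℝ), Homog n Y → Homog ((j:ℤ) + n) (fun z => inner ℝ x z ^ j * Y z) := by
    intro j n Y hY c hc z
    simp only [inner_smul_right, hY c hc z, zpow_add₀ hc.ne', zpow_natCast]
    ring
  have hg := green (hsm j) (hhom j k Y hh)
  simp only [lap_mul_pow hY j hharm x, add_mul] at hg
  have hi1 := integrable_homog (hsm (j-1-1)).continuous (hhom (j-1-1) k Y hh)
  have hi2 := integrable_homog (((contDiff_const.inner ℝ contDiff_id).pow (j-1)).mul (dirD_smooth hY x)).continuous (hhom (j-1) (k-1) _ (dirD_homog hY hh x))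
  simp only [id] at hi2
  rw [integral_add] at hg
  · have hjk0 : (((j:ℤ) + (k:ℤ) : ℤ) : ℝ) ≠ 0 := by
      have : (j:ℤ) + (k:ℤ) ≠ 0 := by omega
      exact_mod_cast this
    have z1 : ∫ a, (j * (j - 1 : ℕ) * ‖x‖ ^ 2) * (inner ℝ x a ^ (j - 1 - 1) * Y a) * gw a = 0 := by
      simp only [mul_assoc _ _ (gw _)]
      rw [integral_const_mul]
      rcases Nat.eq_zero_or_pos j with h0 | h0
      · simp [h0]
      · have := ih (j-1-1) (by omega) k Y hY (by omega) hh hharm x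
        simp only [mul_assoc _ _ (gw _)] at this
        rw [this, mul_zero]
    have z2 : ∫ a, (2 * j) * (inner ℝ x a ^ (j - 1) * dirD x Y a) * gw a = 0 := by
      simp only [mul_assoc _ _ (gw _)]
      rw [integral_const_mul]
      rcases Nat.eq_zero_or_pos j with h0 | h0
      · simp [h0]
      · have := ih (j-1) (by omega) (k-1) (dirD x Y) (dirD_smooth hY x) (by omega)
          (by rw [Nat.cast_sub (by omega)]; exact dirD_homog hY hh x) (fun z => dirD_harm hY hharm x z) x
        simp only [mul_assoc _ _ (gw _)] at this
        rw [this, mul_zero]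
    rw [z1, z2, add_zero] at hg
    exact (mul_eq_zero.1 hg).resolve_left hjk0
  · simp only [mul_assoc _ _ (gw _)] at hi1 ⊢
    exact hi1.const_mul _
  · simp only [mul_assoc _ _ (gw _)] at hi2 ⊢
    exact hi2.const_mul _

lemma sphere_ortho (j k : ℕ) {Y : EuclideanSpace ℝ (Fin d) → ℝ} (hY : ContDiff ℝ (⊤ : ℕ∞) Y)
    (hjk : j < k) (hh : Homog (k:ℤ) Y) (hharm : ∀ z, lapR Y z = 0) (x : EuclideanSpace ℝ (Fin d)) :
    ∫ w, inner ℝ x w ^ j * Y w ∂(nuS (EuclideanSpace ℝ (Fin d))) = 0 := by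
  have hhom : Homog ((j:ℤ) + k) (fun z => inner ℝ x z ^ j * Y z) := by
    intro c hc z
    simp only [inner_smul_right, hh c hc z, zpow_add₀ hc.ne', zpow_natCast]
    ring
  have hsm : Continuous (fun z => inner ℝ x z ^ j * Y z) := by
    have := hY.continuous
    fun_prop
  have h0 := gauss_ortho j k Y hY hjk hh hharm x
  rw [polar2 (integrable_homog hsm hhom)] at h0
  set n := Module.finrank ℝ (EuclideanSpace ℝ (Fin d)) - 1
  have h1 : ∀ r ∈ Ioi (0:ℝ), r ^ n * ∫ w, (inner ℝ x (r • w) ^ j * Y (r • w)) * gw (r • w) ∂(nuS (EuclideanSpace ℝ (Fin d)))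
      = (r ^ (n + j + k) * Real.exp (-(1/2) * r ^ 2)) * ∫ w, inner ℝ x w ^ j * Y w ∂(nuS (EuclideanSpace ℝ (Fin d))) := by
    intro r hr
    have hr : 0 < r := hr
    rw [← integral_const_mul, ← integral_const_mul]
    apply integral_congr_ae
    filter_upwards [nuS_ae] with w hw
    have := hhom r hr w
    simp only at this
    rw [this, gw, norm_smul, hw, Real.norm_of_nonneg hr.le, zpow_add₀ hr.ne', zpow_natCast, zpow_natCast]
    ring_nf
  rw [setIntegral_congr_fun measurableSet_Ioi h1, integral_mul_const] at h0
  refine (mul_eq_zero.1 h0).resolve_left ?_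
  have hpos : 0 < ∫ r in Ioi (0:ℝ), r ^ (n + j + k) * Real.exp (-(1/2) * r ^ 2) := by
    rw [setIntegral_pos_iff_support_of_nonneg_ae]
    · have : Function.support (fun r : ℝ => r ^ (n + j + k) * Real.exp (-(1/2) * r ^ 2)) ∩ Ioi 0 = Ioi 0 := by
        apply inter_eq_right.2
        intro r hr
        have hr : 0 < r := hr
        simp only [Function.mem_support]
        positivity
      rw [this]; simp
    · filter_upwards [ae_restrict_mem measurableSet_Ioi] with r hr
      have hr : 0 < r := hr
      simp only [Pi.zero_apply]
      positivity
    · have h := integrableOn_rpow_mul_exp_neg_mul_sq (b := 1/2) (by norm_num)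
        (s := ((n + j + k : ℕ) : ℝ)) (by
        have : (0:ℝ) ≤ ((n + j + k : ℕ) : ℝ) := Nat.cast_nonneg _
        linarith)
      simpa only [Real.rpow_natCast] using h
  exact hpos.ne'

end ortho
section means
open Set Metric Measure
variable {d : ℕ} [Nontrivial (EuclideanSpace ℝ (Fin d))]

lemma cont_inner_sq (x : EuclideanSpace ℝ (Fin d)) (c : ℝ) :
    Continuous (fun w => √(inner ℝ x w ^ 2 + c)) := by fun_prop

lemma q_pos (b : ℝ) {c : ℝ} (hc : 0 < c) : 0 < √(b ^ 2 + c) := Real.sqrt_pos.2 (by positivity)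

lemma rho_pos (b : ℝ) {c : ℝ} (hc : 0 < c) : 0 < b + √(b ^ 2 + c) := by
  have : |b| < √(b ^ 2 + c) := by
    rw [← Real.sqrt_sq_eq_abs]
    exact Real.sqrt_lt_sqrt (sq_nonneg b) (by linarith)
  have := neg_abs_le b
  linarith

lemma U_zero {k : ℕ} {Y : EuclideanSpace ℝ (Fin d) → ℝ} (hY : ContDiff ℝ (⊤ : ℕ∞) Y)
    (hh : Homog (k:ℤ) Y) (hharm : ∀ z, lapR Y z = 0) (x : EuclideanSpace ℝ (Fin d)) {c : ℝ} (hc : 0 < c)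
    (m : ℕ) : (∀ l, l + m ≤ k → ∫ w, inner ℝ x w ^ l * (((inner ℝ x w + √(inner ℝ x w ^ 2 + c)) ^ m
      - (inner ℝ x w - √(inner ℝ x w ^ 2 + c)) ^ m) / √(inner ℝ x w ^ 2 + c)) * Y w ∂(nuS (EuclideanSpace ℝ (Fin d))) = 0) ∧
      (∀ l, l + (m + 1) ≤ k → ∫ w, inner ℝ x w ^ l * (((inner ℝ x w + √(inner ℝ x w ^ 2 + c)) ^ (m + 1)
      - (inner ℝ x w - √(inner ℝ x w ^ 2 + c)) ^ (m + 1)) / √(inner ℝ x w ^ 2 + c)) * Y w ∂(nuS (EuclideanSpace ℝ (Fin d))) = 0) := by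
  induction m with
  | zero =>
    refine ⟨fun l _ => by simp, fun l hl => ?_⟩
    have h0 := sphere_ortho l k hY (by omega) hh hharm x
    have : ∀ w : EuclideanSpace ℝ (Fin d), inner ℝ x w ^ l * (((inner ℝ x w + √(inner ℝ x w ^ 2 + c)) ^ (0 + 1)
      - (inner ℝ x w - √(inner ℝ x w ^ 2 + c)) ^ (0 + 1)) / √(inner ℝ x w ^ 2 + c)) * Y w = 2 * (inner ℝ x w ^ l * Y w) := by
      intro w
      have := q_pos (inner ℝ x w) hc
      field_simp
      ring
    simp only [this]
    rw [integral_const_mul, h0, mul_zero]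
  | succ m ih =>
    refine ⟨ih.2, fun l hl => ?_⟩
    have h1 := ih.2 (l + 1) (by omega)
    have h2 := ih.1 l (by omega)
    have hint : ∀ l m : ℕ, Integrable (fun w => inner ℝ x w ^ l * (((inner ℝ x w + √(inner ℝ x w ^ 2 + c)) ^ m
      - (inner ℝ x w - √(inner ℝ x w ^ 2 + c)) ^ m) / √(inner ℝ x w ^ 2 + c)) * Y w) (nuS (EuclideanSpace ℝ (Fin d))) := by
      intro l m
      apply nuS_integrable
      apply Continuous.continuousOn
      have hq := cont_inner_sq x c
      have hY' := hY.continuous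
      have hb : Continuous (fun w : EuclideanSpace ℝ (Fin d) => inner ℝ x w) := by fun_prop
      exact ((hb.pow l).mul ((((hb.add hq).pow m).sub ((hb.sub hq).pow m)).div hq
        (fun w => (q_pos _ hc).ne'))).mul hY'
    have : ∀ w : EuclideanSpace ℝ (Fin d), inner ℝ x w ^ l * (((inner ℝ x w + √(inner ℝ x w ^ 2 + c)) ^ (m + 1 + 1)
      - (inner ℝ x w - √(inner ℝ x w ^ 2 + c)) ^ (m + 1 + 1)) / √(inner ℝ x w ^ 2 + c)) * Y w =
      2 * (inner ℝ x w ^ (l + 1) * (((inner ℝ x w + √(inner ℝ x w ^ 2 + c)) ^ (m + 1)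
      - (inner ℝ x w - √(inner ℝ x w ^ 2 + c)) ^ (m + 1)) / √(inner ℝ x w ^ 2 + c)) * Y w) +
      c * (inner ℝ x w ^ l * (((inner ℝ x w + √(inner ℝ x w ^ 2 + c)) ^ m
      - (inner ℝ x w - √(inner ℝ x w ^ 2 + c)) ^ m) / √(inner ℝ x w ^ 2 + c)) * Y w) := by
      intro w
      have hq := q_pos (inner ℝ x w) hc
      have hq2 : √(inner ℝ x w ^ 2 + c) ^ 2 = inner ℝ x w ^ 2 + c := Real.sq_sqrt (by positivity)
      generalize √(inner ℝ x w ^ 2 + c) = q at *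
      generalize inner ℝ x w = b at *
      have hc' : c = q ^ 2 - b ^ 2 := by linarith
      subst hc'
      field_simp
      ring
    simp only [this]
    rw [integral_add ((hint _ _).const_mul _) ((hint _ _).const_mul _), integral_const_mul, integral_const_mul, h1, h2]
    simp

lemma V_nat {k : ℕ} {Y : EuclideanSpace ℝ (Fin d) → ℝ} (hY : ContDiff ℝ (⊤ : ℕ∞) Y)
    (hh : Homog (k:ℤ) Y) (hneg : ∀ z, Y (-z) = (-1) ^ k * Y z)
    (hharm : ∀ z, lapR Y z = 0) (x : EuclideanSpace ℝ (Fin d)) {c : ℝ} (hc : 0 < c)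
    (m : ℕ) (hm : m ≤ k) (hodd : Odd (k + m)) :
    ∫ w, (inner ℝ x w + √(inner ℝ x w ^ 2 + c)) ^ m / √(inner ℝ x w ^ 2 + c) * Y w ∂(nuS (EuclideanSpace ℝ (Fin d))) = 0 := by
  have hU := (U_zero hY hh hharm x hc m).1 0 (by omega)
  have hb : Continuous (fun w : EuclideanSpace ℝ (Fin d) => inner ℝ x w) := by fun_prop
  have hq := cont_inner_sq x c
  have i1 : Integrable (fun w => (inner ℝ x w + √(inner ℝ x w ^ 2 + c)) ^ m / √(inner ℝ x w ^ 2 + c) * Y w) (nuS (EuclideanSpace ℝ (Fin d))) :=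
    nuS_integrable ((((hb.add hq).pow m).div hq (fun w => (q_pos _ hc).ne')).mul hY.continuous).continuousOn
  have i2 : Integrable (fun w => (inner ℝ x w - √(inner ℝ x w ^ 2 + c)) ^ m / √(inner ℝ x w ^ 2 + c) * Y w) (nuS (EuclideanSpace ℝ (Fin d))) :=
    nuS_integrable ((((hb.sub hq).pow m).div hq (fun w => (q_pos _ hc).ne')).mul hY.continuous).continuousOn
  have hsym : ∫ w, (inner ℝ x w - √(inner ℝ x w ^ 2 + c)) ^ m / √(inner ℝ x w ^ 2 + c) * Y w ∂(nuS (EuclideanSpace ℝ (Fin d)))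
    = - ∫ w, (inner ℝ x w + √(inner ℝ x w ^ 2 + c)) ^ m / √(inner ℝ x w ^ 2 + c) * Y w ∂(nuS (EuclideanSpace ℝ (Fin d))) := by
    rw [← nuS_integral_comp (LinearIsometryEquiv.neg ℝ), ← integral_neg]
    congr 1; ext w
    simp only [LinearIsometryEquiv.coe_neg, inner_neg_right, hneg, neg_sq]
    rw [show -inner ℝ x w - √(inner ℝ x w ^ 2 + c) = (-1) * (inner ℝ x w + √(inner ℝ x w ^ 2 + c)) by ring, mul_pow]
    have : (-1:ℝ) ^ m * (-1) ^ k = -1 := by rw [← pow_add, add_comm]; exact hodd.neg_one_pow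
    linear_combination ((inner ℝ x w + √(inner ℝ x w ^ 2 + c)) ^ m / √(inner ℝ x w ^ 2 + c) * Y w) * this
  have : ∀ w : EuclideanSpace ℝ (Fin d), inner ℝ x w ^ 0 * (((inner ℝ x w + √(inner ℝ x w ^ 2 + c)) ^ m
      - (inner ℝ x w - √(inner ℝ x w ^ 2 + c)) ^ m) / √(inner ℝ x w ^ 2 + c)) * Y w =
      (inner ℝ x w + √(inner ℝ x w ^ 2 + c)) ^ m / √(inner ℝ x w ^ 2 + c) * Y w - 
      (inner ℝ x w - √(inner ℝ x w ^ 2 + c)) ^ m / √(inner ℝ x w ^ 2 + c) * Y w := by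
    intro w; ring
  simp only [this] at hU
  rw [integral_sub i1 i2, hsym] at hU
  linarith

lemma V_int {k : ℕ} {Y : EuclideanSpace ℝ (Fin d) → ℝ} (hY : ContDiff ℝ (⊤ : ℕ∞) Y)
    (hh : Homog (k:ℤ) Y) (hneg : ∀ z, Y (-z) = (-1) ^ k * Y z)
    (hharm : ∀ z, lapR Y z = 0) (x : EuclideanSpace ℝ (Fin d)) {c : ℝ} (hc : 0 < c)
    (m : ℤ) (hm : m.natAbs ≤ k) (hodd : Odd (k + m.natAbs)) :
    ∫ w, (inner ℝ x w + √(inner ℝ x w ^ 2 + c)) ^ m / √(inner ℝ x w ^ 2 + c) * Y w ∂(nuS (EuclideanSpace ℝ (Fin d))) = 0 := by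
  have h0 := V_nat hY hh hneg hharm x hc m.natAbs hm hodd
  rcases Int.natAbs_eq m with h | h
  · generalize m.natAbs = n at *
    subst h
    simpa only [zpow_natCast] using h0
  · generalize m.natAbs = n at *
    subst h
    rw [← nuS_integral_comp (LinearIsometryEquiv.neg ℝ)] at h0
    have : ∀ w : EuclideanSpace ℝ (Fin d), (inner ℝ x w + √(inner ℝ x w ^ 2 + c)) ^ (-(n:ℤ)) / √(inner ℝ x w ^ 2 + c) * Y w
      = ((c ^ n)⁻¹ * (-1) ^ k) * ((inner ℝ x ((LinearIsometryEquiv.neg ℝ) w) + √(inner ℝ x ((LinearIsometryEquiv.neg ℝ) w) ^ 2 + c)) ^ n / √(inner ℝ x ((LinearIsometryEquiv.neg ℝ) w) ^ 2 + c) * Y ((LinearIsometryEquiv.neg ℝ) w)) := by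
      intro w
      simp only [LinearIsometryEquiv.coe_neg, inner_neg_right, hneg, neg_sq]
      have hq2 : √(inner ℝ x w ^ 2 + c) ^ 2 = inner ℝ x w ^ 2 + c := Real.sq_sqrt (by positivity)
      have hr := rho_pos (inner ℝ x w) hc
      have e1 : (-inner ℝ x w + √(inner ℝ x w ^ 2 + c)) = c * (inner ℝ x w + √(inner ℝ x w ^ 2 + c))⁻¹ := by
        field_simp
        linarith
      have e2 : (-1:ℝ) ^ k * (-1) ^ k = 1 := by rw [← pow_add]; exact (Even.add_self k).neg_one_pow
      rw [e1, zpow_neg, zpow_natCast, mul_pow, inv_pow]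
      have hcn : (c ^ n)⁻¹ * c ^ n = 1 := inv_mul_cancel₀ (by positivity)
      have hprod : (c ^ n)⁻¹ * c ^ n * ((-1) ^ k * (-1) ^ k) = 1 := by rw [hcn, e2, mul_one]
      linear_combination (-(((inner ℝ x w + √(inner ℝ x w ^ 2 + c)) ^ n)⁻¹ / √(inner ℝ x w ^ 2 + c) * Y w)) * hprod
    simp only [this]
    rw [integral_const_mul, h0, mul_zero]

/-- The function of the statement. -/
def gfun (e : ℤ) (Y : EuclideanSpace ℝ (Fin d) → ℝ) (z : EuclideanSpace ℝ (Fin d)) : ℝ :=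
  ‖z‖ ^ e * Y (‖z‖⁻¹ • z)

lemma gfun_cont (e : ℤ) {Y : EuclideanSpace ℝ (Fin d) → ℝ} (hY : Continuous Y) :
    ContinuousOn (gfun e Y) {0}ᶜ := by
  intro z hz
  have hz : ‖z‖ ≠ 0 := norm_ne_zero_iff.2 hz
  apply ContinuousAt.continuousWithinAt
  unfold gfun
  exact (continuous_norm.continuousAt.zpow₀ e (Or.inl hz)).mul
    (hY.continuousAt.comp ((continuous_norm.continuousAt.inv₀ hz).smul continuousAt_id))

lemma gfun_polar (e : ℤ) (Y : EuclideanSpace ℝ (Fin d) → ℝ) {r : ℝ} (hr : 0 < r)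
    {w : EuclideanSpace ℝ (Fin d)} (hw : ‖w‖ = 1) : gfun e Y (r • w) = r ^ e * Y w := by
  unfold gfun
  rw [norm_smul, hw, Real.norm_of_nonneg hr.le, mul_one, smul_smul, inv_mul_cancel₀ hr.ne', one_smul]

lemma region_iff {x w : EuclideanSpace ℝ (Fin d)} (hw : ‖w‖ = 1) {s r : ℝ} (hs : ‖x‖ < s) (hr : 0 < r) :
    s < ‖r • w - x‖ ↔ inner ℝ x w + √(inner ℝ x w ^ 2 + (s ^ 2 - ‖x‖ ^ 2)) < r := by
  have hs0 : 0 < s := (norm_nonneg x).trans_lt hs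
  have hc : 0 < s ^ 2 - ‖x‖ ^ 2 := by nlinarith [norm_nonneg x]
  have hn : ‖r • w - x‖ ^ 2 = r ^ 2 - 2 * r * inner ℝ x w + ‖x‖ ^ 2 := by
    rw [norm_sub_sq_real, norm_smul, hw, inner_smul_left, real_inner_comm, Real.norm_of_nonneg hr.le]
    simp; ring
  have hrho := rho_pos (-inner ℝ x w) hc
  rw [neg_sq] at hrho
  have hq2 : √(inner ℝ x w ^ 2 + (s ^ 2 - ‖x‖ ^ 2)) ^ 2 = inner ℝ x w ^ 2 + (s ^ 2 - ‖x‖ ^ 2) := Real.sq_sqrt (by positivity)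
  have hq := q_pos (inner ℝ x w) hc
  generalize √(inner ℝ x w ^ 2 + (s ^ 2 - ‖x‖ ^ 2)) = q at *
  generalize inner ℝ x w = b at *
  have h1 : s < ‖r • w - x‖ ↔ s ^ 2 < ‖r • w - x‖ ^ 2 :=
    (sq_lt_sq₀ hs0.le (norm_nonneg _)).symm
  rw [h1, hn]
  constructor
  · intro h
    by_contra hcon
    have : (q - (r - b)) * (q + (r - b)) ≥ 0 := mul_nonneg (by linarith) (by linarith)
    nlinarith
  · intro h
    have : ((r - b) - q) * (q + (r - b)) > 0 := mul_pos (by linarith) (by linarith)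
    nlinarith

/-- Annular region around `x`. -/
def ann (x : EuclideanSpace ℝ (Fin d)) (s1 s2 : ℝ) : Set (EuclideanSpace ℝ (Fin d)) :=
  {z | s1 < ‖z - x‖ ∧ ‖z - x‖ ≤ s2}

lemma ann_meas (x : EuclideanSpace ℝ (Fin d)) (s1 s2 : ℝ) : MeasurableSet (ann x s1 s2) :=
  (isOpen_lt (f := fun _ => s1) (g := fun z => ‖z - x‖) (by fun_prop) (by fun_prop)).measurableSet.inter
    (isClosed_le (f := fun z => ‖z - x‖) (g := fun _ => s2) (by fun_prop) (by fun_prop)).measurableSet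

lemma ann_int (e : ℤ) {Y : EuclideanSpace ℝ (Fin d) → ℝ} (hY : Continuous Y)
    {x : EuclideanSpace ℝ (Fin d)} {s1 s2 : ℝ} (hs : ‖x‖ < s1) :
    Integrable ((ann x s1 s2).indicator (gfun e Y)) := by
  rw [integrable_indicator_iff (ann_meas _ _ _)]
  have hK : IsCompact (closedBall x s2 \ ball x s1) := (isCompact_closedBall x s2).diff isOpen_ball
  have : IntegrableOn (gfun e Y) (closedBall x s2 \ ball x s1) := by
    refine ContinuousOn.integrableOn_compact hK ((gfun_cont e hY).mono ?_)
    rintro z ⟨_, hz⟩ h0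
    apply hz
    rw [mem_singleton_iff.1 h0]
    simpa using hs
  refine this.mono_set ?_
  rintro z ⟨h1, h2⟩
  simp only [mem_sdiff, mem_closedBall, mem_ball, dist_eq_norm, not_lt]
  exact ⟨h2, h1.le⟩

lemma radial (m : ℤ) {x w : EuclideanSpace ℝ (Fin d)} {s1 s2 : ℝ} (hs : ‖x‖ < s1) (h12 : s1 ≤ s2) :
    ∫ r in (inner ℝ x w + √(inner ℝ x w ^ 2 + (s1 ^ 2 - ‖x‖ ^ 2)))..(inner ℝ x w + √(inner ℝ x w ^ 2 + (s2 ^ 2 - ‖x‖ ^ 2))), r ^ m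
    = ∫ t in s1..s2, (inner ℝ x w + √(inner ℝ x w ^ 2 + (t ^ 2 - ‖x‖ ^ 2))) ^ m * (t / √(inner ℝ x w ^ 2 + (t ^ 2 - ‖x‖ ^ 2))) := by
  have hcpos : ∀ t ∈ uIcc s1 s2, 0 < t ^ 2 - ‖x‖ ^ 2 := by
    intro t ht
    rw [uIcc_of_le h12] at ht
    nlinarith [norm_nonneg x, ht.1]
  have hder : ∀ t ∈ uIcc s1 s2, HasDerivAt (fun t => inner ℝ x w + √(inner ℝ x w ^ 2 + (t ^ 2 - ‖x‖ ^ 2)))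
      (t / √(inner ℝ x w ^ 2 + (t ^ 2 - ‖x‖ ^ 2))) t := by
    intro t ht
    have hq := q_pos (inner ℝ x w) (hcpos t ht)
    have h1 : HasDerivAt (fun t : ℝ => inner ℝ x w ^ 2 + (t ^ 2 - ‖x‖ ^ 2)) (2 * t) t := by
      simpa using (((hasDerivAt_pow 2 t).sub_const (‖x‖ ^ 2)).const_add (inner ℝ x w ^ 2))
    have h2 := (h1.sqrt (Real.sqrt_pos.1 hq).ne').const_add (inner ℝ x w)
    refine h2.congr_deriv ?_
    field_simp
  symm
  refine intervalIntegral.integral_comp_mul_deriv' (g := fun r => r ^ m) hder ?_ ?_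
  · refine ContinuousOn.div continuousOn_id (by fun_prop) (fun t ht => (q_pos _ (hcpos t ht)).ne')
  · rintro r ⟨t, ht, rfl⟩
    exact (continuousAt_zpow₀ _ m (Or.inl (rho_pos _ (hcpos t ht)).ne')).continuousWithinAt

lemma ann_integral_zero {k : ℕ} {Y : EuclideanSpace ℝ (Fin d) → ℝ} (hY : ContDiff ℝ (⊤ : ℕ∞) Y)
    (hh : Homog (k:ℤ) Y) (hneg : ∀ z, Y (-z) = (-1) ^ k * Y z)
    (hharm : ∀ z, lapR Y z = 0) {x : EuclideanSpace ℝ (Fin d)} (e m : ℤ)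
    (hem : m = (Module.finrank ℝ (EuclideanSpace ℝ (Fin d)) - 1 : ℕ) + e)
    (hm : m.natAbs ≤ k) (hodd : Odd (k + m.natAbs)) {s1 s2 : ℝ} (hs : ‖x‖ < s1) (h12 : s1 ≤ s2) :
    ∫ z, (ann x s1 s2).indicator (gfun e Y) z = 0 := by
  rw [polar1 (ann_int e hY.continuous hs)]
  set n := Module.finrank ℝ (EuclideanSpace ℝ (Fin d)) - 1 with hn
  have hcpos : ∀ t, s1 ≤ t → 0 < t ^ 2 - ‖x‖ ^ 2 := by
    intro t ht
    nlinarith [norm_nonneg x]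
  have step1 : ∀ᵐ w ∂(nuS (EuclideanSpace ℝ (Fin d))),
      (∫ r in Ioi (0:ℝ), r ^ n * (ann x s1 s2).indicator (gfun e Y) (r • w)) =
      ∫ t in Ioc s1 s2, (inner ℝ x w + √(inner ℝ x w ^ 2 + (t ^ 2 - ‖x‖ ^ 2))) ^ m * (t / √(inner ℝ x w ^ 2 + (t ^ 2 - ‖x‖ ^ 2))) * Y w := by
    filter_upwards [nuS_ae] with w hw
    have hrad := radial m (w := w) hs h12
    set ρ1 := inner ℝ x w + √(inner ℝ x w ^ 2 + (s1 ^ 2 - ‖x‖ ^ 2)) with hρ1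
    set ρ2 := inner ℝ x w + √(inner ℝ x w ^ 2 + (s2 ^ 2 - ‖x‖ ^ 2)) with hρ2
    have hρ1pos : 0 < ρ1 := rho_pos _ (hcpos s1 le_rfl)
    have hρ12 : ρ1 ≤ ρ2 := by
      rw [hρ1, hρ2]
      have : s1 ^ 2 ≤ s2 ^ 2 := by nlinarith [norm_nonneg x]
      gcongr
    rw [intervalIntegral.integral_of_le hρ12, intervalIntegral.integral_of_le h12] at hrad
    rw [integral_mul_const, ← hrad, ← integral_mul_const]
    have : ∀ r ∈ Ioi (0:ℝ), r ^ n * (ann x s1 s2).indicator (gfun e Y) (r • w) =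
        (Ioc ρ1 ρ2).indicator (fun r => r ^ m * Y w) r := by
      intro r hr
      have hr : 0 < r := hr
      have hiff : r • w ∈ ann x s1 s2 ↔ r ∈ Ioc ρ1 ρ2 := by
        have a1 := region_iff (x := x) hw hs hr
        have a2 := region_iff (x := x) hw (hs.trans_le h12) hr
        simp only [ann, mem_ofPred_eq, mem_Ioc]
        rw [a1, ← not_lt, a2, not_lt]
      by_cases h : r ∈ Ioc ρ1 ρ2
      · rw [indicator_of_mem h, indicator_of_mem (hiff.2 h), gfun_polar e Y hr hw, hem, zpow_add₀ hr.ne', zpow_natCast]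
        ring
      · rw [indicator_of_notMem h, indicator_of_notMem (fun hh => h (hiff.1 hh)), mul_zero]
    rw [setIntegral_congr_fun measurableSet_Ioi this, setIntegral_indicator measurableSet_Ioc]
    congr 2
    apply inter_eq_right.2
    intro r hr
    exact hρ1pos.trans hr.1
  rw [integral_congr_ae step1]
  -- Fubini
  have hint : Integrable (fun p : EuclideanSpace ℝ (Fin d) × ℝ =>
      (inner ℝ x p.1 + √(inner ℝ x p.1 ^ 2 + (p.2 ^ 2 - ‖x‖ ^ 2))) ^ m * (p.2 / √(inner ℝ x p.1 ^ 2 + (p.2 ^ 2 - ‖x‖ ^ 2))) * Y p.1)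
      ((nuS (EuclideanSpace ℝ (Fin d))).prod (volume.restrict (Ioc s1 s2))) := by
    have hr : (nuS (EuclideanSpace ℝ (Fin d))).restrict (sphere 0 1) = nuS (EuclideanSpace ℝ (Fin d)) := by
      apply Measure.restrict_eq_self_of_ae_mem
      filter_upwards [nuS_ae] with w hw
      simpa using hw
    rw [← hr, Measure.prod_restrict]
    have hK : IsCompact ((sphere (0 : EuclideanSpace ℝ (Fin d)) 1) ×ˢ Icc s1 s2) :=
      (isCompact_sphere _ _).prod isCompact_Icc
    refine IntegrableOn.mono_set (ContinuousOn.integrableOn_compact hK ?_) (prod_mono le_rfl Ioc_subset_Icc_self)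
    have hb : ContinuousOn (fun p : EuclideanSpace ℝ (Fin d) × ℝ => inner ℝ x p.1) (sphere (0 : EuclideanSpace ℝ (Fin d)) 1 ×ˢ Icc s1 s2) := by fun_prop
    have hq : ContinuousOn (fun p : EuclideanSpace ℝ (Fin d) × ℝ => √(inner ℝ x p.1 ^ 2 + (p.2 ^ 2 - ‖x‖ ^ 2))) (sphere (0 : EuclideanSpace ℝ (Fin d)) 1 ×ˢ Icc s1 s2) := by fun_prop
    refine ContinuousOn.mul (ContinuousOn.mul ((hb.add hq).zpow₀ m ?_) (continuousOn_snd.div hq ?_))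
      (hY.continuous.comp continuous_fst).continuousOn
    · rintro p ⟨_, hp⟩
      exact Or.inl (rho_pos _ (hcpos _ hp.1)).ne'
    · rintro p ⟨_, hp⟩
      exact (q_pos _ (hcpos _ hp.1)).ne'
  rw [integral_integral_swap hint]
  rw [setIntegral_congr_fun (g := fun _ => (0:ℝ)) measurableSet_Ioc]
  · simp
  · intro t ht
    have h0 := V_int hY hh hneg hharm x (hcpos t ht.1.le) m hm hodd
    simp only
    rw [← mul_zero t, ← h0, ← integral_const_mul]
    congr 1; ext w; ring

lemma mean_cont (e : ℤ) {Y : EuclideanSpace ℝ (Fin d) → ℝ} (hY : Continuous Y)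
    (x : EuclideanSpace ℝ (Fin d)) :
    ContinuousOn (fun r : ℝ => ∫ w, gfun e Y (x + r • w) ∂(nuS (EuclideanSpace ℝ (Fin d)))) (Ioi ‖x‖) := by
  rw [continuousOn_iff_continuous_domRestrict]
  have hlc : LocallyCompactSpace (Ioi ‖x‖) := isOpen_Ioi.locallyCompactSpace
  have hcs : CompactSpace (sphere (0:EuclideanSpace ℝ (Fin d)) 1) := isCompact_iff_compactSpace.1 (isCompact_sphere _ _)
  have hc : Continuous (Function.uncurry (fun (r : Ioi ‖x‖) (w : sphere (0:EuclideanSpace ℝ (Fin d)) 1) => gfun e Y (x + (r:ℝ) • (w:EuclideanSpace ℝ (Fin d))))) := by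
    refine (gfun_cont e hY).comp_continuous (f := fun p : Ioi ‖x‖ × sphere (0:EuclideanSpace ℝ (Fin d)) 1 => x + (p.1:ℝ) • (p.2:EuclideanSpace ℝ (Fin d))) (by fun_prop) ?_
    rintro ⟨r, w⟩ h0
    have hr : ‖x‖ < r := r.2
    have hw : ‖(w:EuclideanSpace ℝ (Fin d))‖ = 1 := by simp
    have h0 : x = - ((r:ℝ) • (w:EuclideanSpace ℝ (Fin d))) := eq_neg_of_add_eq_zero_left h0
    have h2 : ‖x‖ = r := by
      conv_lhs => rw [h0]
      rw [norm_neg, norm_smul, hw, mul_one, Real.norm_of_nonneg ((norm_nonneg x).trans hr.le)]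
    linarith
  have := continuous_parametric_integral_of_continuous (μ := (volume : Measure (EuclideanSpace ℝ (Fin d))).toSphere) hc isCompact_univ
  simp only [Measure.restrict_univ] at this
  convert this using 1
  ext r
  exact nuS_integral _

lemma mean_zero {k : ℕ} {Y : EuclideanSpace ℝ (Fin d) → ℝ} (hY : ContDiff ℝ (⊤ : ℕ∞) Y)
    (hh : Homog (k:ℤ) Y) (hneg : ∀ z, Y (-z) = (-1) ^ k * Y z)
    (hharm : ∀ z, lapR Y z = 0) {x : EuclideanSpace ℝ (Fin d)} (e m : ℤ)
    (hem : m = (Module.finrank ℝ (EuclideanSpace ℝ (Fin d)) - 1 : ℕ) + e)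
    (hm : m.natAbs ≤ k) (hodd : Odd (k + m.natAbs)) {s : ℝ} (hs : ‖x‖ < s) :
    ∫ w, gfun e Y (x + s • w) ∂(nuS (EuclideanSpace ℝ (Fin d))) = 0 := by
  obtain ⟨s1, hs1, hs1s⟩ := exists_between hs
  set n := Module.finrank ℝ (EuclideanSpace ℝ (Fin d)) - 1 with hn
  set F : ℝ → ℝ := fun r => r ^ n * ∫ w, gfun e Y (x + r • w) ∂(nuS (EuclideanSpace ℝ (Fin d))) with hF
  have hFc : ContinuousOn F (Ioi ‖x‖) := (continuousOn_id.pow n).mul (mean_cont e hY.continuous x)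
  have hx0 := norm_nonneg x
  have hz : ∀ u, s1 ≤ u → ∫ r in s1..u, F r = 0 := by
    intro u hu
    have h0 := ann_integral_zero hY hh hneg hharm (x := x) e m hem hm hodd hs1 hu
    have hi := ann_int e hY.continuous (x := x) (s1 := s1) (s2 := u) hs1
    rw [← integral_add_left_eq_self _ x, polar2 (hi.comp_add_left x)] at h0
    rw [← h0, intervalIntegral.integral_of_le hu]
    have : ∀ r ∈ Ioi (0:ℝ), r ^ n * ∫ w, (ann x s1 u).indicator (gfun e Y) (x + r • w) ∂(nuS (EuclideanSpace ℝ (Fin d)))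
        = (Ioc s1 u).indicator F r := by
      intro r hr
      have hr : 0 < r := hr
      by_cases h : r ∈ Ioc s1 u
      · rw [indicator_of_mem h, hF]
        simp only
        congr 1
        apply integral_congr_ae
        filter_upwards [nuS_ae] with w hw
        rw [indicator_of_mem]
        simpa [ann, norm_smul, hw, abs_of_pos hr] using h
      · rw [indicator_of_notMem h]
        rw [integral_congr_ae (g := fun _ => (0:ℝ))]
        · simp
        · filter_upwards [nuS_ae] with w hw
          rw [indicator_of_notMem]
          simpa [ann, norm_smul, hw, abs_of_pos hr] using h
    rw [setIntegral_congr_fun measurableSet_Ioi this, setIntegral_indicator measurableSet_Ioc]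
    congr 2
    symm
    apply inter_eq_right.2
    intro r hr
    exact (hx0.trans_lt hs1).trans hr.1
  have hmem : Ioi ‖x‖ ∈ nhds s := isOpen_Ioi.mem_nhds hs
  have hd : HasDerivAt (fun u => ∫ r in s1..u, F r) (F s) s := by
    apply intervalIntegral.integral_hasDerivAt_right
    · apply ContinuousOn.intervalIntegrable
      apply hFc.mono
      rw [uIcc_of_le hs1s.le]
      intro r hr
      exact hs1.trans_le hr.1
    · exact hFc.stronglyMeasurableAtFilter isOpen_Ioi s hs
    · exact hFc.continuousAt hmem
  have hd0 : HasDerivAt (fun u => ∫ r in s1..u, F r) 0 s := by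
    refine (hasDerivAt_const s (0:ℝ)).congr_of_eventuallyEq ?_
    filter_upwards [lt_mem_nhds hs1s] with u hu
    exact hz u hu.le
  have := hd.unique hd0
  refine (mul_eq_zero.1 this).resolve_left ?_
  have : 0 < s := hx0.trans_lt hs
  positivity

end means

lemma sphMeasR_integral (d : ℕ) [Nontrivial (EuclideanSpace ℝ (Fin d))] {s : ℝ} (hs : 0 < s)
    (f : EuclideanSpace ℝ (Fin d) → ℝ)
    (hf : ∫ w, f (s • w) ∂(nuS (EuclideanSpace ℝ (Fin d))) = 0) :
    ∫ y, f y ∂(sphMeasR d s) = 0 := by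
  by_cases h0 : μH[d - 1] (Metric.sphere (0 : EuclideanSpace ℝ (Fin d)) s) = 0
  · have : sphMeasR d s = 0 := by
      unfold sphMeasR
      rw [Measure.restrict_eq_zero.2 h0, smul_zero]
    rw [this, integral_zero_measure]
  by_cases h1 : μH[d - 1] (Metric.sphere (0 : EuclideanSpace ℝ (Fin d)) s) = ⊤
  · have : sphMeasR d s = 0 := by
      unfold sphMeasR
      rw [h1]; simp
    rw [this, integral_zero_measure]
  have hp : IsProbabilityMeasure (sphMeasR d s) := by
    constructor
    unfold sphMeasR
    rw [Measure.smul_apply, Measure.restrict_apply_univ, smul_eq_mul, ENNReal.inv_mul_cancel h0 h1]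
  have hinv : ∀ A : EuclideanSpace ℝ (Fin d) ≃ₗᵢ[ℝ] EuclideanSpace ℝ (Fin d),
      (sphMeasR d s).map A = sphMeasR d s := by
    intro A
    unfold sphMeasR
    rw [Measure.map_smul]
    congr 1
    have hemb : MeasurableEmbedding A := A.toHomeomorph.measurableEmbedding
    have hpre : A ⁻¹' (Metric.sphere (0 : EuclideanSpace ℝ (Fin d)) s) = Metric.sphere 0 s := by
      ext z; simp
    conv_lhs => rw [← hpre]
    rw [← hemb.restrict_map]
    congr 1
    exact A.toIsometryEquiv.map_hausdorffMeasure _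
  have hae : ∀ᵐ y ∂(sphMeasR d s), ‖y‖ = s := by
    unfold sphMeasR
    apply Measure.ae_smul_measure
    filter_upwards [ae_restrict_mem Metric.isClosed_sphere.measurableSet] with y hy
    simpa using hy
  have hsm : Measurable (fun y : EuclideanSpace ℝ (Fin d) => s⁻¹ • y) := by fun_prop
  set μ1 := (sphMeasR d s).map (fun y => s⁻¹ • y) with hμ1
  have p1 : IsProbabilityMeasure μ1 := Measure.isProbabilityMeasure_map hsm.aemeasurable
  set ν1 := (nuS (EuclideanSpace ℝ (Fin d)) Set.univ)⁻¹ • nuS (EuclideanSpace ℝ (Fin d)) with hν1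
  have p2 : IsProbabilityMeasure ν1 := by
    constructor
    rw [hν1, Measure.smul_apply, smul_eq_mul, ENNReal.inv_mul_cancel nuS_univ_ne (measure_ne_top _ _)]
  have heq : μ1 = ν1 := by
    apply sphere_unique
    · intro A
      have hA : Measurable A := A.continuous.measurable
      rw [hμ1, Measure.map_map hA hsm]
      conv_rhs => rw [← hinv A]
      rw [Measure.map_map hsm hA]
      congr 1
      ext1 y
      simp
    · intro A
      rw [hν1, Measure.map_smul, nuS_inv]
    · have : MeasurableSet {w : EuclideanSpace ℝ (Fin d) | ‖w‖ = 1} :=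
        (isClosed_eq continuous_norm continuous_const).measurableSet
      rw [hμ1, ae_map_iff hsm.aemeasurable this]
      filter_upwards [hae] with y hy
      rw [norm_smul, hy, Real.norm_of_nonneg (inv_pos.2 hs).le, inv_mul_cancel₀ hs.ne']
    · rw [hν1]
      exact Measure.ae_smul_measure nuS_ae _
  have hemb : MeasurableEmbedding (fun y : EuclideanSpace ℝ (Fin d) => s⁻¹ • y) :=
    (Homeomorph.smulOfNeZero s⁻¹ (inv_ne_zero hs.ne')).measurableEmbedding
  have h2 : ∫ w, f (s • w) ∂μ1 = ∫ y, f y ∂(sphMeasR d s) := by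
    rw [hμ1, hemb.integral_map]
    congr 1
    ext y
    rw [smul_smul, mul_inv_cancel₀ hs.ne', one_smul]
  rw [← h2, heq, hν1, integral_smul_measure, hf, smul_zero]

theorem stmt14 (d : ℕ) (hd : 2 ≤ d) (k : ℕ) (hk : 0 < k) (i : ℕ) (hi : i ≤ k - 1)
    (B : ℝ) (hB : 0 ≤ B)
    (Y : EuclideanSpace ℝ (Fin d) → ℝ) (hYsmooth : ContDiff ℝ (⊤ : ℕ∞) Y)
    (hYhom : ∀ (c : ℝ) (x : EuclideanSpace ℝ (Fin d)), Y (c • x) = c ^ k * Y x)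
    (hYharm : ∀ x, lapR Y x = 0) :
    ∀ (x : EuclideanSpace ℝ (Fin d)) (s : ℝ), s > ‖x‖ + B →
      (∫ y, ‖x + y‖ ^ ((k : ℤ) - d - 2 * i) * Y (‖x + y‖⁻¹ • (x + y)) ∂(sphMeasR d s)) = 0 := by
  intro x s hs
  have hxs : ‖x‖ < s := by linarith
  have hne : Nontrivial (EuclideanSpace ℝ (Fin d)) := by
    apply Module.nontrivial_of_finrank_pos (R := ℝ)
    simp; omega
  have hneg : ∀ z, Y (-z) = (-1) ^ k * Y z := by
    intro z
    have := hYhom (-1) z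
    simpa using this
  have hhom : Homog (k:ℤ) Y := by
    intro c _ z
    rw [hYhom, zpow_natCast]
  apply sphMeasR_integral d ((norm_nonneg x).trans_lt hxs)
    (fun y => ‖x + y‖ ^ ((k : ℤ) - d - 2 * i) * Y (‖x + y‖⁻¹ • (x + y)))
  refine mean_zero hYsmooth hhom hneg hYharm (x := x) ((k : ℤ) - d - 2 * i) ((k:ℤ) - 1 - 2 * i)
    ?_ ?_ ?_ hxs
  · rw [finrank_euclideanSpace_fin, Nat.cast_sub (by omega)]
    push_cast
    ring
  · omega
  · rw [Nat.odd_iff]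
    omega
end
end
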